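/- There exist absolute constants C1, C2 > 0 with the following property. Let p ≥ 16 be a prime, g a primitive root modulo p, and ind : F_p^* → {1, …, p−1} the discrete logarithm base g (so g^{ind(x)} = x). Let γ ∈ F_p^* have multiplicative order at least exp(C1·log p / log log p). Consider the lazy Markov chain (X_n) on F_p^* started from an arbitrary fixed X_0 ∈ F_p^*, whose one-step transition from a state x is: stay at x with probability 1/2, move to (ind(x) mod p)·γ with probability 1/4, and move to (ind(x) mod p)·γ^{-1} with probability 1/4 (note ind(x) mod p ∈ F_p^* since 1 ≤ ind(x) ≤ p−1). Then for every integer n ≥ exp(C2·log p / log log p), one has (1/2)·max_{A ⊆ F_p^*} |P(X_n ∈ A) − |A|/(p−1)| ≤ 1/4. -/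

import Mathlib

open scoped BigOperators

/-- The distribution of the Markov chain after `n` steps: the `n`-fold bind of
`step` applied to the point mass at `x0`. -/
noncomputable def walkDist {S : Type*} (step : S → PMF S) (x0 : S) : ℕ → PMF S :=
  fun n => (fun μ : PMF S => μ.bind step)^[n] (PMF.pure x0)

/-!
The moves `x ↦ ind x * γ^{±1}` compose to multiplication by `γ ^ 2`, both in the state and in the
logarithmic coordinate, so a function of small Dirichlet energy along them is nearly invariant under
both multiplications. By pigeonhole some small power of `γ ^ 2` is `g ^ (±s)` with `s` small, and in
the logarithmic coordinate multiplication by `g ^ s` is the translation by `s` except near the ends.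
The Fourier transform of the function in that coordinate is then nearly supported on frequencies
`ξ` with `s ξ` close to `0`, and nearly invariant under multiplication by `γ ^ 2`. But the powers of
`γ ^ 2` move every nonzero residue away from `0`: an orbit staying close to `0` would satisfy over
`ℤ` a linear recurrence of small order and height, and the ensuing small solution space cannot
hold that many distinct points. This yields a Poincaré inequality, hence `L²` mixing, with a
constant that is a power of `exp (log p / log log p)`.
-/

section Energy

variable {α E : Type*} [Fintype α] [NormedAddCommGroup E]

/-- The Dirichlet energy of `f` along the permutation `σ`: the squared `ℓ²` distance between `f ∘ σ`
and `f`. All functional inequalities for the walk are stated in terms of it. -/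
def energy (σ : Equiv.Perm α) (f : α → E) : ℝ := ∑ x, ‖f (σ x) - f x‖ ^ 2

lemma energy_nonneg (σ : Equiv.Perm α) (f : α → E) : 0 ≤ energy σ f :=
  Finset.sum_nonneg fun _ _ => sq_nonneg _

lemma norm_sub_sq_le_two_mul (a b c : E) : ‖a - c‖ ^ 2 ≤ 2 * (‖a - b‖ ^ 2 + ‖b - c‖ ^ 2) :=
  (pow_le_pow_left₀ (norm_nonneg _) (norm_sub_le_norm_sub_add_norm_sub a b c) 2).trans add_sq_le

lemma norm_sq_le_two_mul_norm_sq_add (a b : E) : ‖a‖ ^ 2 ≤ 2 * (‖b‖ ^ 2 + ‖b - a‖ ^ 2) := by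
  simpa only [sub_zero, norm_sub_rev a b, add_comm] using norm_sub_sq_le_two_mul a b 0

lemma energy_inv (σ : Equiv.Perm α) (f : α → E) : energy σ⁻¹ f = energy σ f := by
  unfold energy
  rw [← Equiv.sum_comp σ]
  simp only [Equiv.Perm.inv_def, Equiv.symm_apply_apply, norm_sub_rev]

lemma energy_conj (φ σ : Equiv.Perm α) (f : α → E) :
    energy (φ * σ * φ⁻¹) f = energy σ (f ∘ φ) := by
  unfold energy
  rw [← Equiv.sum_comp φ]
  simp only [Equiv.Perm.mul_apply, Equiv.Perm.inv_def, Equiv.symm_apply_apply,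
    Function.comp_apply]

lemma energy_mul_le (σ τ : Equiv.Perm α) (f : α → E) :
    energy (σ * τ) f ≤ 2 * (energy σ f + energy τ f) := by
  have hσ : energy σ f = ∑ x, ‖f (σ (τ x)) - f (τ x)‖ ^ 2 :=
    (Equiv.sum_comp τ fun x => ‖f (σ x) - f x‖ ^ 2).symm
  rw [hσ, energy, energy, ← Finset.sum_add_distrib, Finset.mul_sum]
  exact Finset.sum_le_sum fun x _ => norm_sub_sq_le_two_mul _ _ _

lemma energy_pow_le (σ : Equiv.Perm α) (f : α → E) (r : ℕ) :
    energy (σ ^ r) f ≤ (r : ℝ) ^ 2 * energy σ f := by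
  have hpath (x : α) : ‖f ((σ ^ r) x) - f x‖ ^ 2 ≤
      r * ∑ i ∈ Finset.range r, ‖f ((σ ^ (i + 1)) x) - f ((σ ^ i) x)‖ ^ 2 := by
    have htel : f ((σ ^ r) x) - f x =
        ∑ i ∈ Finset.range r, (f ((σ ^ (i + 1)) x) - f ((σ ^ i) x)) :=
      (Finset.sum_range_sub (fun i => f ((σ ^ i) x)) r).symm
    rw [htel]
    refine (pow_le_pow_left₀ (norm_nonneg _) (norm_sum_le _ _) 2).trans ?_
    simpa only [Finset.card_range] using
      sq_sum_le_card_mul_sum_sq (s := Finset.range r)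
        (f := fun i => ‖f ((σ ^ (i + 1)) x) - f ((σ ^ i) x)‖)
  have hstep (i : ℕ) : ∑ x, ‖f ((σ ^ (i + 1)) x) - f ((σ ^ i) x)‖ ^ 2 = energy σ f := by
    simp only [pow_succ' σ, Equiv.Perm.mul_apply]
    exact Equiv.sum_comp (σ ^ i) fun x => ‖f (σ x) - f x‖ ^ 2
  refine (Finset.sum_le_sum fun x _ => hpath x).trans_eq ?_
  rw [← Finset.mul_sum, Finset.sum_comm, Finset.sum_congr rfl fun i _ => hstep i, Finset.sum_const,
    Finset.card_range, nsmul_eq_mul]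
  ring

lemma energy_pow_le_of_le {r R : ℕ} (hr : r ≤ R) (σ : Equiv.Perm α) (f : α → E) :
    energy (σ ^ r) f ≤ (R : ℝ) ^ 2 * energy σ f :=
  (energy_pow_le σ f r).trans (by have := energy_nonneg σ f; gcongr)

lemma energy_le_of_eq_off {σ τ : Equiv.Perm α} {B : Finset α} (hστ : ∀ x ∉ B, σ x = τ x)
    (f : α → E) :
    energy σ f ≤ energy τ f + 2 * (∑ x ∈ B, ‖f (σ x)‖ ^ 2 + ∑ x ∈ B, ‖f x‖ ^ 2) := by
  classical
  have hB : ∑ x ∈ B, ‖f (σ x) - f x‖ ^ 2 ≤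
      2 * (∑ x ∈ B, ‖f (σ x)‖ ^ 2 + ∑ x ∈ B, ‖f x‖ ^ 2) := by
    rw [← Finset.sum_add_distrib, Finset.mul_sum]
    refine Finset.sum_le_sum fun x _ => ?_
    simpa only [sub_zero, zero_sub, norm_neg] using norm_sub_sq_le_two_mul (f (σ x)) 0 (f x)
  have hBc : ∑ x ∈ Bᶜ, ‖f (σ x) - f x‖ ^ 2 ≤ energy τ f := by
    rw [Finset.sum_congr rfl fun x hx => by rw [hστ x (Finset.mem_compl.1 hx)]]
    exact Finset.sum_le_univ_sum_of_nonneg fun _ => sq_nonneg _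
  rw [energy, ← Finset.sum_add_sum_compl B]
  linarith

lemma sum_mul_norm_sq_le {m : α → ℝ} {M : ℝ} (hm : ∀ x, 0 ≤ m x) (hM : ∀ x, m x ≤ M)
    (σ : Equiv.Perm α) (f : α → E) :
    ∑ x, m x * ‖f x‖ ^ 2 ≤ 2 * ∑ x, m x * ‖f (σ x)‖ ^ 2 + 2 * M * energy σ f := by
  rw [energy, Finset.mul_sum, Finset.mul_sum, ← Finset.sum_add_distrib]
  refine Finset.sum_le_sum fun x _ => ?_
  calc m x * ‖f x‖ ^ 2
      ≤ m x * (2 * (‖f (σ x)‖ ^ 2 + ‖f (σ x) - f x‖ ^ 2)) :=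
        mul_le_mul_of_nonneg_left (norm_sq_le_two_mul_norm_sq_add _ _) (hm x)
    _ = 2 * (m x * ‖f (σ x)‖ ^ 2) + 2 * m x * ‖f (σ x) - f x‖ ^ 2 := by ring
    _ ≤ 2 * (m x * ‖f (σ x)‖ ^ 2) + 2 * M * ‖f (σ x) - f x‖ ^ 2 := by gcongr; exact hM x

-- If a set has `R` disjoint translates along `τ`, then a function of small energy cannot
-- concentrate on it.
lemma nat_mul_sum_norm_sq_le_of_pairwiseDisjoint {B : Finset α} {R : ℕ} {τ : Equiv.Perm α}
    (hB : (Finset.range R : Set ℕ).PairwiseDisjoint fun r => B.map (τ ^ r).toEmbedding)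
    (f : α → E) :
    R * ∑ x ∈ B, ‖f x‖ ^ 2 ≤ 2 * ∑ x, ‖f x‖ ^ 2 + 2 * (R : ℝ) ^ 3 * energy τ f := by
  classical
  have hmass (r : ℕ) (hr : r ∈ Finset.range R) : ∑ x ∈ B, ‖f x‖ ^ 2 ≤
      2 * ∑ x ∈ B.map (τ ^ r).toEmbedding, ‖f x‖ ^ 2 + 2 * ((R : ℝ) ^ 2 * energy τ f) := by
    have hind := sum_mul_norm_sq_le (m := fun x => if x ∈ B then (1 : ℝ) else 0) (M := 1)
      (fun x => by positivity) (fun x => by split_ifs <;> norm_num) (τ ^ r) f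
    simp only [ite_mul, one_mul, zero_mul, Finset.sum_ite_mem, Finset.univ_inter, mul_one] at hind
    have henergy := energy_pow_le_of_le (Finset.mem_range.1 hr).le τ f
    rw [Finset.sum_map]
    simp only [Equiv.coe_toEmbedding]
    linarith
  have hunion : ∑ r ∈ Finset.range R, ∑ x ∈ B.map (τ ^ r).toEmbedding, ‖f x‖ ^ 2 ≤
      ∑ x, ‖f x‖ ^ 2 := by
    rw [← Finset.sum_biUnion hB]
    exact Finset.sum_le_univ_sum_of_nonneg fun _ => sq_nonneg _
  have hsum := Finset.sum_le_sum hmass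
  rw [Finset.sum_const, Finset.card_range, nsmul_eq_mul, Finset.sum_add_distrib, ← Finset.mul_sum,
    Finset.sum_const, Finset.card_range, nsmul_eq_mul] at hsum
  linarith

-- The weight `m` need not be bounded below: it suffices that every orbit meets a point where it is.
lemma mul_sum_norm_sq_le_of_exists_pow {m : α → ℝ} {M κ : ℝ} {N : ℕ} {τ : Equiv.Perm α}
    (hm : ∀ x, 0 ≤ m x) (hM : ∀ x, m x ≤ M) {f : α → E}
    (hκ : ∀ x, f x ≠ 0 → ∃ i < N, κ ≤ m ((τ ^ i) x)) :
    κ * ∑ x, ‖f x‖ ^ 2 ≤ 2 * N * ∑ x, m x * ‖f x‖ ^ 2 + 2 * M * (N : ℝ) ^ 3 * energy τ f := by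
  have hlower : κ * ∑ x, ‖f x‖ ^ 2 ≤
      ∑ i ∈ Finset.range N, ∑ x, m ((τ ^ i) x) * ‖f x‖ ^ 2 := by
    rw [Finset.sum_comm, Finset.mul_sum]
    refine Finset.sum_le_sum fun x _ => ?_
    rw [← Finset.sum_mul]
    rcases eq_or_ne (f x) 0 with hx | hx
    · simp [hx]
    · obtain ⟨i, hiN, hi⟩ := hκ x hx
      gcongr
      exact hi.trans (Finset.single_le_sum (f := fun i => m ((τ ^ i) x)) (fun _ _ => hm _)
        (Finset.mem_range.2 hiN))
  have hupper (i : ℕ) (hi : i ∈ Finset.range N) : ∑ x, m ((τ ^ i) x) * ‖f x‖ ^ 2 ≤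
      2 * ∑ x, m x * ‖f x‖ ^ 2 + 2 * M * ((N : ℝ) ^ 2 * energy τ f) := by
    rcases isEmpty_or_nonempty α with _ | ⟨⟨x₀⟩⟩
    · simp [energy]
    have hM0 : 0 ≤ M := (hm x₀).trans (hM x₀)
    refine (sum_mul_norm_sq_le (fun _ => hm _) (fun _ => hM _) (τ ^ i) f).trans ?_
    rw [Equiv.sum_comp (τ ^ i) fun x => m x * ‖f x‖ ^ 2]
    gcongr
    exact energy_pow_le_of_le (Finset.mem_range.1 hi).le τ f
  calc κ * ∑ x, ‖f x‖ ^ 2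
      ≤ ∑ _i ∈ Finset.range N,
          (2 * ∑ x, m x * ‖f x‖ ^ 2 + 2 * M * ((N : ℝ) ^ 2 * energy τ f)) :=
        hlower.trans (Finset.sum_le_sum hupper)
    _ = 2 * N * ∑ x, m x * ‖f x‖ ^ 2 + 2 * M * (N : ℝ) ^ 3 * energy τ f := by
        rw [Finset.sum_const, Finset.card_range, nsmul_eq_mul]; ring

end Energy

section Recurrence

open Polynomial

/-- The space of length-`w` windows of sequences annihilated by `P`, acting as a polynomial in the
shift operator. -/
def recurrenceWindow {K : Type*} [CommRing K] (P : K[X]) (w : ℕ) : Submodule K (Fin w → K) where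
  carrier := {f | ∀ (n : ℕ) (hn : n + P.natDegree < w),
    ∑ i : Fin (P.natDegree + 1), P.coeff i * f ⟨n + i, by omega⟩ = 0}
  zero_mem' := by simp
  add_mem' hf hg n hn := by
    simp only [Pi.add_apply, mul_add, Finset.sum_add_distrib, hf n hn, hg n hn, add_zero]
  smul_mem' a f hf n hn := by
    simp only [Pi.smul_apply, smul_eq_mul, mul_left_comm _ a, ← Finset.mul_sum, hf n hn, mul_zero]

lemma finrank_recurrenceWindow_le {K : Type*} [Field K] {P : K[X]} (hP : P ≠ 0) (w : ℕ) :
    Module.finrank K (recurrenceWindow P w) ≤ P.natDegree := by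
  let init : recurrenceWindow P w →ₗ[K] (Fin P.natDegree → K) :=
    LinearMap.pi fun i => if h : (i : ℕ) < w then
      (LinearMap.proj (⟨i, h⟩ : Fin w)).comp (recurrenceWindow P w).subtype else 0
  have hinit : Function.Injective init := by
    rw [injective_iff_map_eq_zero]
    rintro ⟨f, hf⟩ hf0
    have hzero (n : ℕ) (hn : n < w) : f ⟨n, hn⟩ = 0 := by
      induction n using Nat.strong_induction_on with
      | _ n ih =>
        rcases lt_or_ge n P.natDegree with hnd | hnd
        · simpa [init, hn] using congrFun hf0 ⟨n, hnd⟩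
        · have hrec := hf (n - P.natDegree) (by omega)
          rw [Fin.sum_univ_castSucc, Finset.sum_eq_zero fun i _ => by
            simp only [Fin.val_castSucc]
            rw [ih (n - P.natDegree + i) (by omega), mul_zero]] at hrec
          simpa [hP, Nat.sub_add_cancel hnd] using hrec
    ext n
    exact hzero n n.2
  simpa using LinearMap.finrank_le_finrank_of_injective hinit

lemma exists_norm_sub_lt_one_of_pow_finrank_lt_card {V ι : Type*} [NormedAddCommGroup V]
    [NormedSpace ℝ V] [FiniteDimensional ℝ V] [Fintype ι]
    (hcard : 5 ^ Module.finrank ℝ V < Fintype.card ι) {y : ι → V} (hy : ∀ k, ‖y k‖ ≤ 2) :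
    ∃ k k', k ≠ k' ∧ ‖y k - y k'‖ < 1 := by
  classical
  by_contra! hsep
  have hinj : Function.Injective y := fun k k' hkk' => by
    by_contra hne
    have := hsep k k' hne
    rw [hkk', sub_self, norm_zero] at this
    linarith
  refine hcard.not_ge ?_
  rw [← Finset.card_univ, ← Finset.card_image_of_injective _ hinj]
  refine Besicovitch.card_le_of_separated _ (by simpa using hy) ?_
  simp only [Finset.mem_image, Finset.mem_univ, true_and, forall_exists_index,
    forall_apply_eq_imp_iff]
  exact fun k k' hne => hsep k k' fun h => hne (h ▸ rfl)

-- Sliding windows of length `w` over a solution of a linear recurrence of order `d` live in a space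
-- of dimension at most `d`, so two of any `5 ^ d + 1` of them are close in the sup norm.
lemma exists_windows_abs_sub_lt {P : ℤ[X]} (hP : P ≠ 0) {w : ℕ} {B : ℤ} {x : ℕ → ℤ}
    (hx : ∀ n < w + 5 ^ P.natDegree, |x n| < 2 * B)
    (hrec : ∀ n, n + P.natDegree < w + 5 ^ P.natDegree →
      ∑ i ∈ Finset.range (P.natDegree + 1), P.coeff i * x (n + i) = 0) :
    ∃ k k', k < k' ∧ k' ≤ 5 ^ P.natDegree ∧ ∀ n < w, |x (k' + n) - x (k + n)| < B := by
  have hB : (0 : ℝ) < B := by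
    have := (abs_nonneg _).trans_lt (hx 0 (by positivity))
    exact_mod_cast (by linarith : 0 < B)
  set Q : ℝ[X] := P.map (Int.castRingHom ℝ) with hQ
  have hQ0 : Q ≠ 0 := (Polynomial.map_ne_zero_iff (RingHom.injective_int _)).2 hP
  have hdeg : Q.natDegree = P.natDegree :=
    natDegree_map_eq_of_injective (RingHom.injective_int _) P
  let f : ℕ → Fin w → ℝ := fun k n => (x (k + n) : ℝ) / B
  have hf (k : Fin (5 ^ P.natDegree + 1)) : f k ∈ recurrenceWindow Q w := by
    intro n hn
    have hk : (∑ i ∈ Finset.range (Q.natDegree + 1), (P.coeff i : ℝ) * x (k + n + i)) = 0 := by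
      rw [hdeg]
      exact_mod_cast hrec (k + n) (by omega)
    rw [Finset.sum_range] at hk
    simp only [f, hQ, coeff_map, eq_intCast, mul_div_assoc', ← Finset.sum_div, ← add_assoc] at hk ⊢
    rw [hk, zero_div]
  have hnorm (k : Fin (5 ^ P.natDegree + 1)) : ‖(⟨f k, hf k⟩ : recurrenceWindow Q w)‖ ≤ 2 := by
    refine (pi_norm_le_iff_of_nonneg zero_le_two).2 fun n => ?_
    have hkn : |(x (k + n) : ℝ)| < 2 * B := by exact_mod_cast hx (k + n) (by omega)
    change ‖(x (k + n) : ℝ) / B‖ ≤ 2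
    rw [Real.norm_eq_abs, abs_div, abs_of_pos hB, div_le_iff₀ hB]
    exact hkn.le
  have hcard : 5 ^ Module.finrank ℝ (recurrenceWindow Q w) <
      Fintype.card (Fin (5 ^ P.natDegree + 1)) := by
    rw [Fintype.card_fin, Nat.lt_succ_iff, ← hdeg]
    exact Nat.pow_le_pow_right (by norm_num) (finrank_recurrenceWindow_le hQ0 w)
  obtain ⟨k, k', hne, hlt⟩ := exists_norm_sub_lt_one_of_pow_finrank_lt_card hcard hnorm
  wlog hkk' : k < k' generalizing k k'
  · exact this k' k hne.symm (by rwa [norm_sub_rev])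
      (lt_of_le_of_ne (not_lt.1 hkk') hne.symm)
  refine ⟨k, k', hkk', by omega, fun n hn => ?_⟩
  have hcoord : ‖f k ⟨n, hn⟩ - f k' ⟨n, hn⟩‖ < 1 :=
    (norm_le_pi_norm (f k - f k') ⟨n, hn⟩).trans_lt hlt
  rw [norm_sub_rev, Real.norm_eq_abs, ← sub_div, abs_div, abs_of_pos hB, div_lt_one hB] at hcoord
  exact_mod_cast hcoord

end Recurrence

section Escape

open Polynomial

lemma exists_polynomial_aeval_eq_zero_of_card_lt {A : Type*} [CommRing A] [Fintype A] {D H : ℕ}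
    (hcard : Fintype.card A < (H + 1) ^ (D + 1)) (l : A) :
    ∃ P : ℤ[X], P ≠ 0 ∧ P.natDegree ≤ D ∧ (∀ i, |P.coeff i| ≤ H) ∧ aeval l P = 0 := by
  classical
  let poly : (Fin (D + 1) → Fin (H + 1)) → ℤ[X] := fun a => ofFn (D + 1) fun i => ((a i : ℕ) : ℤ)
  obtain ⟨a, b, hab, heval⟩ := Fintype.exists_ne_map_eq_of_card_lt
    (fun a => aeval l (poly a)) (by simpa using hcard)
  refine ⟨poly a - poly b, ?_, ?_, fun i => ?_, by rw [map_sub, heval, sub_self]⟩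
  · contrapose! hab
    ext i
    have hi := congrArg (fun P => P.coeff i) hab
    simp only [poly, coeff_sub, ofFn_coeff_eq_val_of_lt _ i.2, coeff_zero, sub_eq_zero] at hi
    exact_mod_cast hi
  · exact (natDegree_sub_le _ _).trans (max_le
      (Nat.lt_succ_iff.1 (ofFn_natDegree_lt (by omega) _))
      (Nat.lt_succ_iff.1 (ofFn_natDegree_lt (by omega) _)))
  · rw [coeff_sub]
    rcases lt_or_ge i (D + 1) with hi | hi
    · simp only [poly, ofFn_coeff_eq_val_of_lt _ hi]
      rw [abs_le]
      constructor <;> omega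
    · simp [poly, ofFn_coeff_eq_zero_of_ge _ hi]

-- Modulo `p` the recurrence given by `P` always holds; it lifts to `ℤ` while both sides stay small.
lemma sum_coeff_mul_valMinAbs_eq_zero {p : ℕ} {P : ℤ[X]} (hP : P ≠ 0) {l : ZMod p}
    (hl : aeval l P = 0) {L B : ℤ} (hL : ∑ i ∈ Finset.range (P.natDegree + 1), |P.coeff i| ≤ L)
    (hB : B * L ≤ p) (b : ZMod p) (n : ℕ)
    (hsmall : ∀ i ≤ P.natDegree, |(b * l ^ (n + i)).valMinAbs| < B) :
    ∑ i ∈ Finset.range (P.natDegree + 1), P.coeff i * (b * l ^ (n + i)).valMinAbs = 0 := by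
  refine Int.eq_zero_of_abs_lt_dvd (m := p) ?_ ?_
  · rw [← ZMod.intCast_zmod_eq_zero_iff_dvd]
    push_cast [ZMod.coe_valMinAbs]
    rw [aeval_eq_sum_range] at hl
    calc ∑ i ∈ Finset.range (P.natDegree + 1),
          (P.coeff i : ZMod p) * (b * l ^ (n + i))
        = b * l ^ n * ∑ i ∈ Finset.range (P.natDegree + 1), P.coeff i • l ^ i := by
          rw [Finset.mul_sum]
          refine Finset.sum_congr rfl fun i _ => ?_
          rw [pow_add, zsmul_eq_mul]
          ring
      _ = 0 := by rw [hl, mul_zero]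
  · have hB0 : 0 ≤ B := (abs_nonneg _).trans (hsmall 0 (Nat.zero_le _)).le
    have hlead : 0 < |P.coeff P.natDegree| := abs_pos.2 (leadingCoeff_ne_zero.2 hP)
    calc |∑ i ∈ Finset.range (P.natDegree + 1), P.coeff i * (b * l ^ (n + i)).valMinAbs|
        ≤ ∑ i ∈ Finset.range (P.natDegree + 1), |P.coeff i * (b * l ^ (n + i)).valMinAbs| :=
          Finset.abs_sum_le_sum_abs _ _
      _ < ∑ i ∈ Finset.range (P.natDegree + 1), |P.coeff i| * B := by
          simp only [abs_mul]
          refine Finset.sum_lt_sum (fun i hi => ?_) ⟨P.natDegree, by simp, ?_⟩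
          · exact mul_le_mul_of_nonneg_left
              (hsmall i (Nat.lt_succ_iff.1 (Finset.mem_range.1 hi))).le (abs_nonneg _)
          · exact mul_lt_mul_of_pos_left (hsmall _ le_rfl) hlead
      _ ≤ B * L := by
          rw [← Finset.sum_mul, mul_comm]
          gcongr
      _ ≤ p := hB

lemma valMinAbs_sub_of_abs_sub_mul_two_lt {p : ℕ} [NeZero p] (a b : ZMod p)
    (hab : |a.valMinAbs - b.valMinAbs| * 2 < p) :
    (a - b).valMinAbs = a.valMinAbs - b.valMinAbs := by
  have := abs_lt.1 (show |(a.valMinAbs - b.valMinAbs) * 2| < p by rwa [abs_mul, abs_two])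
  rw [ZMod.valMinAbs_spec]
  exact ⟨by push_cast [ZMod.coe_valMinAbs]; rfl, this.1, this.2.le⟩

-- If the orbit of `b` stayed below `2 ^ (m + 1)`, two of its windows would differ by less than
-- `2 ^ m`; their difference is the orbit of some `b' ≠ 0`, against the induction hypothesis.
lemma exists_two_pow_le_abs_valMinAbs_mul_pow {p : ℕ} [Fact p.Prime] {P : ℤ[X]} (hP : P ≠ 0)
    {l : ZMod p} (hl : aeval l P = 0) (hord : 5 ^ P.natDegree < orderOf l) {L : ℤ}
    (hL : ∑ i ∈ Finset.range (P.natDegree + 1), |P.coeff i| ≤ L) (m : ℕ) (hm : 2 ^ m * L ≤ p)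
    {b : ZMod p} (hb : b ≠ 0) :
    ∃ n < 1 + m * 5 ^ P.natDegree, (2 : ℤ) ^ m ≤ |(b * l ^ n).valMinAbs| := by
  induction m generalizing b with
  | zero =>
    refine ⟨0, by simp, ?_⟩
    simpa only [pow_zero, mul_one] using
      Int.one_le_abs ((ZMod.valMinAbs_eq_zero b).not.2 hb)
  | succ m ih =>
    by_contra! hsmall
    have hL1 : 1 ≤ L := by
      have hlead : 1 ≤ |P.coeff P.natDegree| := Int.one_le_abs (leadingCoeff_ne_zero.2 hP)
      exact hlead.trans ((Finset.single_le_sum (f := fun i => |P.coeff i|)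
        (fun _ _ => abs_nonneg _) (Finset.self_mem_range_succ _)).trans hL)
    have h2m : (0 : ℤ) < 2 ^ m := by positivity
    have hbound : ∀ n < 1 + m * 5 ^ P.natDegree + 5 ^ P.natDegree,
        |(b * l ^ n).valMinAbs| < 2 ^ (m + 1) :=
      fun n hn => hsmall n (by rw [Nat.succ_mul]; omega)
    obtain ⟨k, k', hkk', hk', hclose⟩ := exists_windows_abs_sub_lt hP
      (x := fun n => (b * l ^ n).valMinAbs) (B := 2 ^ m)
      (fun n hn => by simpa only [pow_succ'] using hbound n hn)
      (fun n hn => sum_coeff_mul_valMinAbs_eq_zero hP hl hL hm b n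
        fun i hi => hbound _ (by omega))
    have hne : b * (l ^ k' - l ^ k) ≠ 0 := mul_ne_zero hb <| sub_ne_zero.2 fun h =>
      hkk'.ne' (pow_injOn_Iio_orderOf (hk'.trans_lt hord) ((hkk'.le.trans hk').trans_lt hord) h)
    obtain ⟨n, hn, hbig⟩ := ih (by rw [pow_succ] at hm; nlinarith) hne
    have horbit : b * (l ^ k' - l ^ k) * l ^ n = b * l ^ (k' + n) - b * l ^ (k + n) := by
      rw [pow_add, pow_add]; ring
    rw [horbit, valMinAbs_sub_of_abs_sub_mul_two_lt] at hbig
    · exact (hclose n hn).not_ge hbig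
    · rw [pow_succ] at hm
      nlinarith [hclose n hn]

/-- Quantitative escape from `0`: for every nonzero residue `b`, one of the first `N` points of the
orbit `b, b l, b l ^ 2, …` is at distance at least `p / (2 L)` from `0`. The bound is stated without
division. -/
def Escapes {p : ℕ} (l : ZMod p) (L N : ℕ) : Prop :=
  ∀ b : ZMod p, b ≠ 0 → ∃ n < N, (p : ℤ) ≤ 2 * L * |(b * l ^ n).valMinAbs|

lemma Escapes.ne_zero {p : ℕ} [Fact p.Prime] {l : ZMod p} {L N : ℕ} (h : Escapes l L N) :
    L ≠ 0 := by
  rintro rfl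
  obtain ⟨n, -, hn⟩ := h 1 one_ne_zero
  rw [Nat.cast_zero, mul_zero, zero_mul] at hn
  exact hn.not_gt (Nat.cast_pos.2 (Fact.out : p.Prime).pos)

lemma escapes_of_lt_pow {p : ℕ} [Fact p.Prime] {D H : ℕ} (hH : p < (H + 1) ^ (D + 1))
    {l : ZMod p} (hord : 5 ^ D < orderOf l) :
    Escapes l ((D + 1) * H) (1 + Nat.log 2 p * 5 ^ D) := by
  intro b hb
  set L := (D + 1) * H with hLdef
  rcases lt_or_ge p L with hpL | hLp
  · refine ⟨0, by omega, ?_⟩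
    have hb1 : 1 ≤ |(b * l ^ 0).valMinAbs| := Int.one_le_abs (by simpa using hb)
    nlinarith
  have hp : 1 < p := (Fact.out : p.Prime).one_lt
  have hL0 : 0 < L := by
    rcases Nat.eq_zero_or_pos H with rfl | hH0
    · simp at hH
      omega
    · positivity
  obtain ⟨P, hP, hdeg, hcoeff, hl⟩ :=
    exists_polynomial_aeval_eq_zero_of_card_lt (by rwa [ZMod.card]) l
  have hsum : ∑ i ∈ Finset.range (P.natDegree + 1), |P.coeff i| ≤ (L : ℤ) :=
    calc ∑ i ∈ Finset.range (P.natDegree + 1), |P.coeff i|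
        ≤ ∑ _i ∈ Finset.range (P.natDegree + 1), (H : ℤ) := Finset.sum_le_sum fun i _ => hcoeff i
      _ = (P.natDegree + 1) * H := by simp
      _ ≤ L := by rw [hLdef]; push_cast; gcongr
  have h5 : 5 ^ P.natDegree ≤ 5 ^ D := Nat.pow_le_pow_right (by norm_num) hdeg
  set m := Nat.log 2 (p / L)
  have hm : 2 ^ m * L ≤ p :=
    (Nat.le_div_iff_mul_le hL0).1 (Nat.pow_log_le_self 2 (Nat.div_pos hLp hL0).ne')
  have hm' : p < 2 ^ (m + 1) * L :=
    (Nat.div_lt_iff_lt_mul hL0).1 (Nat.lt_pow_succ_log_self one_lt_two _)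
  obtain ⟨n, hn, hbig⟩ := exists_two_pow_le_abs_valMinAbs_mul_pow hP hl (h5.trans_lt hord) hsum m
    (by exact_mod_cast hm) hb
  refine ⟨n, hn.trans_le ?_, ?_⟩
  · gcongr
    exact Nat.log_mono_right (Nat.div_le_self p L)
  · calc (p : ℤ) ≤ 2 ^ (m + 1) * L := by exact_mod_cast hm'.le
      _ = 2 * L * 2 ^ m := by ring
      _ ≤ 2 * L * |(b * l ^ n).valMinAbs| := by gcongr

end Escape

section Fourier

variable {N : ℕ}

/-- Multiplication by units of `ZMod N`, as permutations of `ZMod N`. -/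
abbrev dilation : (ZMod N)ˣ →* Equiv.Perm (ZMod N) := MulAction.toPermHom _ _

lemma dilation_apply (l : (ZMod N)ˣ) (x : ZMod N) : dilation l x = l * x := rfl

lemma dilation_pow_apply (l : (ZMod N)ˣ) (i : ℕ) (x : ZMod N) :
    (dilation l ^ i) x = (l : ZMod N) ^ i * x := by
  rw [← map_pow, dilation_apply, Units.val_pow_eq_pow_val]

variable [NeZero N]

lemma sum_norm_dft_sq (Φ : ZMod N → ℂ) : ∑ k, ‖ZMod.dft Φ k‖ ^ 2 = N * ∑ j, ‖Φ j‖ ^ 2 := by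
  have hexpand (k : ZMod N) : (‖ZMod.dft Φ k‖ ^ 2 : ℂ) =
      ∑ i, ∑ j, Φ i * starRingEnd ℂ (Φ j) * ZMod.stdAddChar (k * (j - i)) := by
    rw [← Complex.mul_conj', ZMod.dft_apply, map_sum, Finset.sum_mul_sum]
    refine Finset.sum_congr rfl fun i _ => Finset.sum_congr rfl fun j _ => ?_
    rw [smul_eq_mul, smul_eq_mul, map_mul (starRingEnd ℂ), ← AddChar.map_neg_eq_conj, neg_neg,
      show k * (j - i) = -(i * k) + j * k by ring, AddChar.map_add_eq_mul]
    ring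
  have horth (i j : ZMod N) : ∑ k, Φ i * starRingEnd ℂ (Φ j) * ZMod.stdAddChar (k * (j - i)) =
      if j = i then N * (Φ i * starRingEnd ℂ (Φ j)) else 0 := by
    rw [← Finset.mul_sum, AddChar.sum_mulShift _ (ZMod.isPrimitive_stdAddChar N), ZMod.card]
    simp only [sub_eq_zero, Nat.cast_ite, Nat.cast_zero, mul_ite, mul_zero, mul_comm (N : ℂ)]
  have hcomplex : ∑ k, (‖ZMod.dft Φ k‖ ^ 2 : ℂ) = N * ∑ j, (‖Φ j‖ ^ 2 : ℂ) := by
    simp only [hexpand]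
    rw [Finset.sum_comm, Finset.mul_sum]
    refine Finset.sum_congr rfl fun i _ => ?_
    rw [Finset.sum_comm]
    simp only [horth, Finset.sum_ite_eq', Finset.mem_univ, if_true, Complex.mul_conj']
  exact_mod_cast hcomplex

lemma dft_comp_addRight (Φ : ZMod N → ℂ) (s k : ZMod N) :
    ZMod.dft (Φ ∘ Equiv.addRight s) k = ZMod.stdAddChar (s * k) * ZMod.dft Φ k := by
  rw [ZMod.dft_apply, ZMod.dft_apply, Finset.mul_sum,
    ← Equiv.sum_comp (Equiv.addRight s) fun j =>
      ZMod.stdAddChar (s * k) * ZMod.stdAddChar (-(j * k)) • Φ j]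
  refine Finset.sum_congr rfl fun j _ => ?_
  simp only [Equiv.coe_addRight, Function.comp_apply, smul_eq_mul]
  rw [← mul_assoc, ← AddChar.map_add_eq_mul, show s * k + -((j + s) * k) = -(j * k) by ring]

lemma sum_norm_stdAddChar_sub_one_sq_mul_norm_dft_sq (Φ : ZMod N → ℂ) (s : ZMod N) :
    ∑ k, ‖(ZMod.stdAddChar (s * k) : ℂ) - 1‖ ^ 2 * ‖ZMod.dft Φ k‖ ^ 2 =
      N * energy (Equiv.addRight s) Φ := by
  have hdft (k : ZMod N) : ZMod.dft (Φ ∘ Equiv.addRight s - Φ) k =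
      (ZMod.stdAddChar (s * k) - 1) * ZMod.dft Φ k := by
    rw [map_sub, Pi.sub_apply, dft_comp_addRight, sub_one_mul]
  simp only [← mul_pow, ← norm_mul, ← hdft]
  exact sum_norm_dft_sq _

lemma energy_dilation_dft (l : (ZMod N)ˣ) (Φ : ZMod N → ℂ) :
    energy (dilation l) (ZMod.dft Φ) = N * energy (dilation l) Φ := by
  have hdft (k : ZMod N) : ZMod.dft Φ (dilation l k) - ZMod.dft Φ k =
      ZMod.dft (Φ ∘ dilation l⁻¹ - Φ) k := by
    rw [map_sub, Pi.sub_apply]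
    congr 1
    exact (ZMod.dft_comp_unitMul Φ l⁻¹ k).symm
  rw [← energy_inv (dilation l) Φ, ← map_inv, energy]
  simp only [hdft]
  exact sum_norm_dft_sq _

lemma le_norm_stdAddChar_sub_one (z : ZMod N) :
    4 * |(z.valMinAbs : ℝ)| / N ≤ ‖(ZMod.stdAddChar z : ℂ) - 1‖ := by
  have hN : (0 : ℝ) < N := Nat.cast_pos.2 (NeZero.pos N)
  set θ : ℝ := Real.pi * z.valMinAbs / N with hθ
  have hexp : (ZMod.stdAddChar z : ℂ) = Complex.exp (Complex.I * (2 * θ : ℝ)) := by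
    conv_lhs => rw [← ZMod.coe_valMinAbs z, ZMod.stdAddChar_coe]
    congr 1
    rw [hθ]
    push_cast
    ring
  have habs : |θ| = Real.pi * |(z.valMinAbs : ℝ)| / N := by
    rw [hθ, abs_div, abs_mul, abs_of_pos Real.pi_pos, abs_of_pos hN]
  have hhalf : |(z.valMinAbs : ℝ)| * 2 ≤ N := by
    have := abs_le.2 ⟨z.valMinAbs_mem_Ioc.1.le, z.valMinAbs_mem_Ioc.2⟩
    rw [abs_mul, abs_two] at this
    exact_mod_cast this
  have hsin := Real.mul_abs_le_abs_sin (x := θ) (by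
    rw [habs, div_le_div_iff₀ hN two_pos, mul_assoc]
    gcongr)
  rw [hexp, Complex.norm_exp_I_mul_ofReal_sub_one, mul_div_cancel_left₀ θ two_ne_zero,
    Real.norm_eq_abs, abs_mul, abs_two]
  calc 4 * |(z.valMinAbs : ℝ)| / N
      = 2 * (2 / Real.pi * |θ|) := by rw [habs]; field_simp; ring
    _ ≤ 2 * |Real.sin θ| := by gcongr

lemma mul_sum_norm_sq_le_energy_addRight_add_energy_dilation {Φ : ZMod N → ℂ}
    (hΦ : ∑ j, Φ j = 0) {s : ZMod N} {l : (ZMod N)ˣ} {κ : ℝ} {K : ℕ}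
    (hκ : ∀ ξ : ZMod N, ξ ≠ 0 → ∃ i < K,
      κ ≤ ‖(ZMod.stdAddChar (s * ((l : ZMod N) ^ i * ξ)) : ℂ) - 1‖ ^ 2) :
    κ * ∑ j, ‖Φ j‖ ^ 2 ≤
      2 * K * energy (Equiv.addRight s) Φ + 8 * (K : ℝ) ^ 3 * energy (dilation l) Φ := by
  have hN : (0 : ℝ) < N := Nat.cast_pos.2 (NeZero.pos N)
  have hM (ξ : ZMod N) : ‖(ZMod.stdAddChar (s * ξ) : ℂ) - 1‖ ^ 2 ≤ 4 := by
    have := norm_sub_le (ZMod.stdAddChar (s * ξ) : ℂ) 1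
    rw [AddChar.norm_apply, norm_one] at this
    nlinarith [norm_nonneg ((ZMod.stdAddChar (s * ξ) : ℂ) - 1)]
  have hgap := mul_sum_norm_sq_le_of_exists_pow (τ := dilation l) (f := ZMod.dft Φ) (κ := κ)
    (N := K) (fun ξ => sq_nonneg ‖(ZMod.stdAddChar (s * ξ) : ℂ) - 1‖) hM fun ξ hξ => by
      simp only [dilation_pow_apply]
      refine hκ ξ fun h0 => hξ ?_
      rw [h0, ZMod.dft_apply_zero, hΦ]
  rw [sum_norm_dft_sq, sum_norm_stdAddChar_sub_one_sq_mul_norm_dft_sq, energy_dilation_dft] at hgap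
  refine le_of_mul_le_mul_left (hgap.trans_eq' ?_ |>.trans_eq ?_) hN <;> ring

end Fourier

section Exponential

lemma exists_pow_eq_pow_of_mem_zpowers {G : Type*} [Group G] [Finite G] {g l : G}
    (hl : l ∈ Subgroup.zpowers g)
    {J : ℕ} (hJ0 : 0 < J) (hJ : J < orderOf l) :
    ∃ k ≤ J, ∃ s, 0 < s ∧ s * (J + 1) ≤ orderOf g ∧ (g ^ s = l ^ k ∨ g ^ s = (l ^ k)⁻¹) := by
  obtain ⟨a, rfl⟩ := hl
  obtain ⟨j, k, hk0, hkJ, hjk⟩ :=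
    Real.exists_int_int_abs_mul_sub_le ((a : ℝ) / orderOf g) hJ0
  lift k to ℕ using hk0.le
  have hn : (0 : ℝ) < orderOf g := Nat.cast_pos.2 (orderOf_pos g)
  set d : ℤ := k * a - j * orderOf g with hd
  have hpow : g ^ d = (g ^ a) ^ k := by
    rw [hd, zpow_sub, mul_comm j, zpow_mul g (orderOf g : ℤ), zpow_natCast, pow_orderOf_eq_one,
      one_zpow, inv_one, mul_one, mul_comm, zpow_mul, zpow_natCast]
  refine ⟨k, by exact_mod_cast hkJ, d.natAbs, Int.natAbs_pos.2 fun hd0 => ?_, ?_, ?_⟩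
  · have h1 : (g ^ a) ^ k = 1 := by rw [← hpow, hd0, zpow_zero]
    have hk : orderOf (g ^ a) ≤ k := orderOf_le_of_pow_eq_one (by exact_mod_cast hk0) h1
    exact hJ.not_ge (hk.trans (by exact_mod_cast hkJ))
  · have hdist : (d : ℝ) = (k * ((a : ℝ) / orderOf g) - j) * orderOf g := by
      rw [hd, sub_mul, mul_assoc, div_mul_cancel₀ _ hn.ne']
      push_cast
      rfl
    rw [le_div_iff₀ (by positivity), Int.cast_natCast] at hjk
    have : |(d : ℝ)| * (J + 1) ≤ orderOf g := by
      rw [hdist, abs_mul, abs_of_pos hn, mul_right_comm]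
      exact mul_le_of_le_one_left hn.le hjk
    rw [← Int.cast_abs, Int.abs_eq_natAbs] at this
    exact_mod_cast this
  · rw [← hpow, ← zpow_natCast, ← zpow_neg]
    rcases Int.natAbs_eq d with h | h
    · exact Or.inl (by rw [← h])
    · exact Or.inr (by rw [h]; simp)

lemma sum_comp_le_sum_of_forall_mem {α : Type*} {F : α → ℝ} (hF : ∀ x, 0 ≤ F x) {B T : Finset α}
    {ψ : Equiv.Perm α} (hψ : ∀ x ∈ B, F (ψ x) ≠ 0 → ψ x ∈ T) :
    ∑ x ∈ B, F (ψ x) ≤ ∑ x ∈ T, F x := by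
  classical
  rw [← Finset.sum_filter_ne_zero, ← Finset.sum_image (f := F) ψ.injective.injOn]
  refine Finset.sum_le_sum_of_subset_of_nonneg ?_ fun x _ _ => hF x
  simp only [Finset.image_subset_iff, Finset.mem_filter, and_imp]
  exact hψ

variable {p : ℕ}

/-- The set `{g ^ b, …, g ^ (b + s - 1)}`. In the logarithmic coordinate it is an interval. -/
def powBlock (g : (ZMod p)ˣ) (b s : ℕ) : Finset (ZMod p) :=
  (Finset.Ico b (b + s)).image fun a => (g : ZMod p) ^ a

lemma pow_mem_powBlock {g : (ZMod p)ˣ} {a b s : ℕ} (hb : b ≤ a) (hs : a < b + s) :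
    (g : ZMod p) ^ a ∈ powBlock g b s :=
  Finset.mem_image_of_mem _ (Finset.mem_Ico.2 ⟨hb, hs⟩)

lemma pairwiseDisjoint_map_powBlock {g : (ZMod p)ˣ} {R s : ℕ} (hRs : R * s ≤ orderOf g) (b : ℕ) :
    (Finset.range R : Set ℕ).PairwiseDisjoint fun r =>
      (powBlock g b s).map (dilation (g ^ s) ^ r).toEmbedding := by
  intro r hr r' hr' hne
  simp only [Function.onFun, powBlock]
  rw [Finset.disjoint_left]
  simp only [Finset.mem_map, Finset.mem_image, Finset.mem_Ico, Equiv.coe_toEmbedding,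
    dilation_pow_apply, Finset.coe_range, Set.mem_Iio] at hr hr' ⊢
  rintro _ ⟨_, ⟨a, ⟨hba, has⟩, rfl⟩, rfl⟩ ⟨_, ⟨a', ⟨hba', has'⟩, rfl⟩, heq⟩
  have hexp : g ^ (s * r' + (a' - b)) = g ^ (s * r + (a - b)) := by
    refine mul_right_cancel (b := g ^ b) ?_
    rw [← pow_add, ← pow_add, add_assoc, add_assoc, Nat.sub_add_cancel hba, Nat.sub_add_cancel hba']
    ext
    simpa only [Units.val_mul, Units.val_pow_eq_pow_val, pow_add, pow_mul] using heq
  have hlt {i c : ℕ} (hi : i < R) (hc : c < s) : s * i + c < orderOf g := by nlinarith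
  have heq' := pow_injOn_Iio_orderOf (hlt hr' (by omega)) (hlt hr (by omega)) hexp
  have hdiv {i c : ℕ} (hc : c < s) : (s * i + c) / s = i := by
    rw [Nat.mul_add_div (by omega), Nat.div_eq_of_lt hc, add_zero]
  refine hne ?_
  rw [← hdiv (i := r) (c := a - b) (by omega), ← heq', hdiv (by omega)]

variable [Fact p.Prime] {g : (ZMod p)ˣ}

/-- The discrete exponential `z ↦ g ^ z` in base a primitive root, made a permutation of `ZMod p`
by taking representatives in `{1, …, p - 1}` and fixing `0`. -/
noncomputable def expPerm (hg : IsPrimitiveRoot g (p - 1)) : Equiv.Perm (ZMod p) :=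
  Equiv.ofBijective (fun z => if z = 0 then 0 else (g : ZMod p) ^ z.val) <| by
    refine Finite.injective_iff_bijective.1 fun z w hzw => ?_
    have hg0 (a : ℕ) : (g : ZMod p) ^ a ≠ 0 := pow_ne_zero a g.ne_zero
    split_ifs at hzw with hz hw hw
    · rw [hz, hw]
    · exact absurd hzw.symm (hg0 _)
    · exact absurd hzw (hg0 _)
    have hz' := ZMod.val_pos.2 hz
    have hw' := ZMod.val_pos.2 hw
    have hexp : g ^ (z.val - 1) = g ^ (w.val - 1) := by
      refine mul_right_cancel (b := g) ?_
      rw [← pow_succ, ← pow_succ, Nat.sub_add_cancel hz', Nat.sub_add_cancel hw']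
      exact_mod_cast hzw
    have hzp := z.val_lt
    have hwp := w.val_lt
    exact ZMod.val_injective p (by have := hg.pow_inj (by omega) (by omega) hexp; omega)

variable (hg : IsPrimitiveRoot g (p - 1))

lemma expPerm_zero : expPerm hg 0 = 0 := by simp [expPerm]

lemma expPerm_of_ne_zero {z : ZMod p} (hz : z ≠ 0) : expPerm hg z = (g : ZMod p) ^ z.val := by
  simp [expPerm, hz]

lemma expPerm_natCast {a : ℕ} (ha0 : 0 < a) (hap : a < p) :
    expPerm hg a = (g : ZMod p) ^ a := by
  have hval := ZMod.val_natCast_of_lt hap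
  rw [expPerm_of_ne_zero hg fun h => ?_, hval]
  rw [h, ZMod.val_zero] at hval
  omega

lemma add_natCast_eq_natCast_val_add (z : ZMod p) (s : ℕ) : z + s = (z.val + s : ℕ) := by
  rw [Nat.cast_add, ZMod.natCast_rightInverse]

-- Where it does not wrap around, adding `s` to the exponent is multiplication by `g ^ s`.
lemma addRight_eq_conj_dilation {z : ZMod p} {s : ℕ} (hz : z ≠ 0) (hzs : z.val + s < p) :
    Equiv.addRight (s : ZMod p) z =
      ((expPerm hg)⁻¹ * dilation (g ^ s) * (expPerm hg)⁻¹⁻¹) z := by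
  have hz0 := ZMod.val_pos.2 hz
  rw [inv_inv, Equiv.Perm.mul_apply, Equiv.Perm.mul_apply, Equiv.Perm.eq_inv_iff_eq,
    Equiv.coe_addRight]
  simp only [add_natCast_eq_natCast_val_add]
  rw [expPerm_natCast hg (by omega) hzs, expPerm_of_ne_zero hg hz, dilation_apply,
    Units.val_pow_eq_pow_val, pow_add, mul_comm]

lemma energy_addRight_comp_expPerm_le {E : Type*} [NormedAddCommGroup E] {u : ZMod p → E}
    (hu : u 0 = 0) {s : ℕ} (hs : s < p) :
    energy (Equiv.addRight (s : ZMod p)) (u ∘ expPerm hg) ≤ energy (dilation (g ^ s)) u +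
      2 * (∑ x ∈ powBlock g 1 s, ‖u x‖ ^ 2 + ∑ x ∈ powBlock g (p - s) s, ‖u x‖ ^ 2) := by
  set φ := expPerm hg
  set B : Finset (ZMod p) := {z | z = 0 ∨ p ≤ z.val + s}
  have hF (x : ZMod p) : 0 ≤ ‖u x‖ ^ 2 := sq_nonneg _
  have hF0 {x : ZMod p} (hx : ‖u x‖ ^ 2 ≠ 0) : x ≠ 0 := by
    rintro rfl
    simp [hu] at hx
  have hoff (z : ZMod p) (hz : z ∉ B) :
      Equiv.addRight (s : ZMod p) z = (φ⁻¹ * dilation (g ^ s) * φ⁻¹⁻¹) z := by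
    simp only [B, Finset.mem_filter, Finset.mem_univ, true_and, not_or, not_le] at hz
    exact addRight_eq_conj_dilation hg hz.1 hz.2
  refine (energy_le_of_eq_off hoff (u ∘ φ)).trans ?_
  rw [energy_conj, Function.comp_assoc, show ⇑φ ∘ ⇑φ⁻¹ = id from φ.self_comp_symm,
    Function.comp_id]
  gcongr
  · refine sum_comp_le_sum_of_forall_mem (ψ := φ * Equiv.addRight (s : ZMod p)) hF
      fun z hz hz' => ?_
    have hzs : z + s ≠ 0 := fun h => hF0 hz' (by simp [h, φ, expPerm_zero])
    have hval : ∃ a : ℕ, a ≤ s ∧ z + s = a := by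
      rcases (Finset.mem_filter.1 hz).2 with rfl | hzp
      · exact ⟨s, le_rfl, zero_add _⟩
      · refine ⟨z.val + s - p, by have := z.val_lt; omega, ?_⟩
        rw [add_natCast_eq_natCast_val_add, Nat.cast_sub hzp, ZMod.natCast_self, sub_zero]
    obtain ⟨a, has, ha⟩ := hval
    have ha0 : 0 < a := Nat.pos_of_ne_zero fun h => hzs (by rw [ha, h, Nat.cast_zero])
    simp only [Equiv.Perm.mul_apply, Equiv.coe_addRight, ha, φ]
    rw [expPerm_natCast hg ha0 (has.trans_lt hs)]
    exact pow_mem_powBlock ha0 (by omega)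
  · refine sum_comp_le_sum_of_forall_mem hF fun z hz hz' => ?_
    have hz0 : z ≠ 0 := fun h => hF0 hz' (by rw [h]; exact expPerm_zero hg)
    have hzp := (Finset.mem_filter.1 hz).2.resolve_left hz0
    rw [expPerm_of_ne_zero hg hz0]
    exact pow_mem_powBlock (by omega) (by have := z.val_lt; omega)

lemma mul_energy_addRight_comp_expPerm_le {E : Type*} [NormedAddCommGroup E] {u : ZMod p → E}
    (hu : u 0 = 0) {R s : ℕ} (hR : 0 < R) (hRs : R * s ≤ p - 1) :
    R * energy (Equiv.addRight (s : ZMod p)) (u ∘ expPerm hg) ≤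
      8 * ∑ x, ‖u x‖ ^ 2 + 9 * (R : ℝ) ^ 3 * energy (dilation (g ^ s)) u := by
  have hp := (Fact.out : p.Prime).pos
  have hs : s < p := by nlinarith [Nat.sub_add_cancel hp]
  have hmass (b : ℕ) := nat_mul_sum_norm_sq_le_of_pairwiseDisjoint
    (pairwiseDisjoint_map_powBlock (hRs.trans_eq hg.eq_orderOf) b) u
  have hδ := energy_nonneg (dilation (g ^ s)) u
  have hR3 : R * energy (dilation (g ^ s)) u ≤ (R : ℝ) ^ 3 * energy (dilation (g ^ s)) u := by
    gcongr
    exact le_self_pow₀ (by exact_mod_cast hR) three_ne_zero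
  calc R * energy (Equiv.addRight (s : ZMod p)) (u ∘ expPerm hg)
      ≤ R * (energy (dilation (g ^ s)) u +
          2 * (∑ x ∈ powBlock g 1 s, ‖u x‖ ^ 2 + ∑ x ∈ powBlock g (p - s) s, ‖u x‖ ^ 2)) := by
        gcongr
        exact energy_addRight_comp_expPerm_le hg hu hs
    _ = R * energy (dilation (g ^ s)) u + 2 * (R * ∑ x ∈ powBlock g 1 s, ‖u x‖ ^ 2) +
          2 * (R * ∑ x ∈ powBlock g (p - s) s, ‖u x‖ ^ 2) := by ring
    _ ≤ 8 * ∑ x, ‖u x‖ ^ 2 + 9 * (R : ℝ) ^ 3 * energy (dilation (g ^ s)) u := by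
        linarith [hmass 1, hmass (p - s)]

end Exponential

section Poincare

variable {p : ℕ} [Fact p.Prime] {g : (ZMod p)ˣ} (hg : IsPrimitiveRoot g (p - 1))

lemma four_mul_sum_norm_sq_le_of_escapes {l : (ZMod p)ˣ} {L N : ℕ} (hl : Escapes (l : ZMod p) L N)
    {s : ZMod p} (hs : s ≠ 0) {Φ : ZMod p → ℂ} (hΦ : ∑ x, Φ x = 0) :
    4 * ∑ x, ‖Φ x‖ ^ 2 ≤ (L : ℝ) ^ 2 *
      (2 * N * energy (Equiv.addRight s) Φ + 8 * (N : ℝ) ^ 3 * energy (dilation l) Φ) := by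
  have hp : (0 : ℝ) < p := Nat.cast_pos.2 (Fact.out : p.Prime).pos
  have hL : (0 : ℝ) < L := Nat.cast_pos.2 (Nat.pos_of_ne_zero hl.ne_zero)
  have hκ (ξ : ZMod p) (hξ : ξ ≠ 0) : ∃ n < N,
      4 / (L : ℝ) ^ 2 ≤ ‖(ZMod.stdAddChar (s * ((l : ZMod p) ^ n * ξ)) : ℂ) - 1‖ ^ 2 := by
    obtain ⟨n, hnN, hn⟩ := hl (s * ξ) (mul_ne_zero hs hξ)
    refine ⟨n, hnN, ?_⟩
    rw [show s * ((l : ZMod p) ^ n * ξ) = s * ξ * (l : ZMod p) ^ n by ring]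
    set z := s * ξ * (l : ZMod p) ^ n
    have hn' : (p : ℝ) ≤ 2 * L * |(z.valMinAbs : ℝ)| := by exact_mod_cast hn
    have hz : 2 / (L : ℝ) ≤ ‖(ZMod.stdAddChar z : ℂ) - 1‖ := by
      refine le_trans ?_ (le_norm_stdAddChar_sub_one z)
      rw [div_le_div_iff₀ hL hp]
      linarith
    calc 4 / (L : ℝ) ^ 2 = (2 / L) ^ 2 := by rw [div_pow]; norm_num
      _ ≤ ‖(ZMod.stdAddChar z : ℂ) - 1‖ ^ 2 := by gcongr
  have hgap := mul_sum_norm_sq_le_energy_addRight_add_energy_dilation hΦ hκ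
  rwa [div_mul_eq_mul_div, div_le_iff₀' (by positivity)] at hgap

-- Some power of `l` is a shift by a small `s` in the logarithmic coordinate, and there it is almost
-- an additive translation.
lemma exists_mul_energy_addRight_le (l : (ZMod p)ˣ) {R : ℕ} (hR0 : 0 < R)
    (hR : R < orderOf l) :
    ∃ s : ZMod p, s ≠ 0 ∧ ∀ u : ZMod p → ℂ, u 0 = 0 →
      R * energy (Equiv.addRight s) (u ∘ expPerm hg) ≤
        8 * ∑ x, ‖u x‖ ^ 2 + 9 * (R : ℝ) ^ 5 * energy (dilation l) u := by
  have hl : l ∈ Subgroup.zpowers g := by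
    rw [Subgroup.eq_top_of_card_eq (Subgroup.zpowers g) (by
      rw [Nat.card_zpowers, ← hg.eq_orderOf, Nat.card_eq_fintype_card, ZMod.card_units])]
    exact Subgroup.mem_top l
  obtain ⟨k, hkR, s, hs0, hsR, hsk⟩ := exists_pow_eq_pow_of_mem_zpowers hl hR0 hR
  rw [← hg.eq_orderOf] at hsR
  have hp := (Fact.out : p.Prime).pos
  have hsp : s < p := by nlinarith [Nat.sub_add_cancel hp]
  refine ⟨s, fun h => ?_, fun u hu => ?_⟩
  · exact (Nat.le_of_dvd hs0 ((ZMod.natCast_eq_zero_iff s p).1 h)).not_gt hsp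
  have hδ : energy (dilation (g ^ s)) u ≤ (R : ℝ) ^ 2 * energy (dilation l) u := by
    refine le_trans (le_of_eq ?_) (energy_pow_le_of_le hkR (dilation l) u)
    rcases hsk with h | h
    · rw [h, map_pow]
    · rw [h, map_inv, energy_inv, map_pow]
  refine (mul_energy_addRight_comp_expPerm_le hg hu hR0 (by nlinarith)).trans ?_
  calc 8 * ∑ x, ‖u x‖ ^ 2 + 9 * (R : ℝ) ^ 3 * energy (dilation (g ^ s)) u
      ≤ 8 * ∑ x, ‖u x‖ ^ 2 + 9 * (R : ℝ) ^ 3 * ((R : ℝ) ^ 2 * energy (dilation l) u) := by gcongr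
    _ = _ := by ring

lemma sum_norm_sq_le_energy_dilation_add {l : (ZMod p)ˣ} {L N R : ℕ} (hl : Escapes (l : ZMod p) L N)
    (hNLR : 8 * N * L ^ 2 ≤ R) (hR : R < orderOf l)
    {u : ZMod p → ℂ} (hu0 : u 0 = 0) (hu : ∑ x, u x = 0) :
    ∑ x, ‖u x‖ ^ 2 ≤ 9 * (L : ℝ) ^ 2 * N ^ 3 * R ^ 4 *
      (energy (dilation l) u + energy (dilation l) (u ∘ expPerm hg)) := by
  have hN : 1 ≤ N := by obtain ⟨n, hn, -⟩ := hl 1 one_ne_zero; omega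
  have hL : 1 ≤ L := Nat.one_le_iff_ne_zero.2 hl.ne_zero
  have hR0 : 1 ≤ R := hNLR.trans' (Nat.one_le_iff_ne_zero.2 (by positivity))
  obtain ⟨s, hs, hshift⟩ := exists_mul_energy_addRight_le hg l hR0 hR
  have hA := hshift u hu0
  have hgap := four_mul_sum_norm_sq_le_of_escapes hl hs (Φ := u ∘ expPerm hg)
    (by rw [← hu]; exact Equiv.sum_comp (expPerm hg) u)
  rw [show ∑ x, ‖(u ∘ expPerm hg) x‖ ^ 2 = ∑ x, ‖u x‖ ^ 2 from
    Equiv.sum_comp (expPerm hg) fun x => ‖u x‖ ^ 2] at hgap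
  have hE₁ := energy_nonneg (dilation l) u
  have hE₂ := energy_nonneg (dilation l) (u ∘ expPerm hg)
  set U := ∑ x, ‖u x‖ ^ 2
  set E₁ := energy (dilation l) u
  set E₂ := energy (dilation l) (u ∘ expPerm hg)
  set A := energy (Equiv.addRight s) (u ∘ expPerm hg)
  have : 0 ≤ U := Finset.sum_nonneg fun _ _ => sq_nonneg _
  have hNLR' : 8 * N * (L : ℝ) ^ 2 ≤ R := by exact_mod_cast hNLR
  have hN3 : (N : ℝ) ≤ N ^ 3 := le_self_pow₀ (by exact_mod_cast hN) three_ne_zero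
  have hR4 : (1 : ℝ) ≤ R ^ 4 := one_le_pow₀ (by exact_mod_cast hR0)
  refine le_of_mul_le_mul_left ?_ (by positivity : (0 : ℝ) < 2 * R)
  calc 2 * R * U = R * (4 * U) - 2 * R * U := by ring
    _ ≤ R * (L ^ 2 * (2 * N * A + 8 * N ^ 3 * E₂)) - 2 * (8 * N * (L : ℝ) ^ 2) * U := by gcongr
    _ = L ^ 2 * (2 * N * (R * A)) + L ^ 2 * (8 * N ^ 3 * R * E₂) - 16 * N * L ^ 2 * U := by ring
    _ ≤ L ^ 2 * (2 * N * (8 * U + 9 * R ^ 5 * E₁)) + L ^ 2 * (8 * N ^ 3 * R * E₂) -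
          16 * N * L ^ 2 * U := by gcongr
    _ = 2 * R * L ^ 2 * (9 * N * R ^ 4 * E₁ + 4 * N ^ 3 * 1 * E₂) := by ring
    _ ≤ 2 * R * L ^ 2 * (9 * N ^ 3 * R ^ 4 * E₁ + 9 * N ^ 3 * R ^ 4 * E₂) := by
        gcongr
        norm_num
    _ = _ := by ring

lemma sum_norm_sq_le_energy_mul_inv {γ : (ZMod p)ˣ} {L N R : ℕ}
    (hγ : Escapes ((γ ^ 2 : (ZMod p)ˣ) : ZMod p) L N) (hNLR : 8 * N * L ^ 2 ≤ R)
    (hR : R < orderOf (γ ^ 2)) {u : ZMod p → ℂ} (hu0 : u 0 = 0) (hu : ∑ x, u x = 0) :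
    ∑ x, ‖u x‖ ^ 2 ≤ 36 * (L : ℝ) ^ 2 * N ^ 3 * R ^ 4 *
      (energy (dilation γ * (expPerm hg)⁻¹) u + energy (dilation γ⁻¹ * (expPerm hg)⁻¹) u) := by
  set φ := expPerm hg
  set ρ := dilation γ * φ⁻¹ with hρ
  set ρ' := dilation γ⁻¹ * φ⁻¹ with hρ'
  have hstate : energy (dilation (γ ^ 2)) u ≤ 2 * (energy ρ u + energy ρ' u) := by
    have hfactor : dilation (γ ^ 2) = ρ * ρ'⁻¹ := by
      rw [hρ, hρ', map_inv, pow_two, map_mul]; group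
    rw [hfactor, ← energy_inv ρ']
    exact energy_mul_le _ _ _
  have hlog : energy (dilation (γ ^ 2)) (u ∘ φ) ≤ 2 * (energy ρ u + energy ρ' u) := by
    have hfactor : φ * dilation (γ ^ 2) * φ⁻¹ = ρ'⁻¹ * ρ := by
      rw [hρ, hρ', map_inv, pow_two, map_mul]; group
    rw [← energy_conj, hfactor, ← energy_inv ρ', add_comm]
    exact energy_mul_le _ _ _
  calc ∑ x, ‖u x‖ ^ 2
      ≤ 9 * (L : ℝ) ^ 2 * N ^ 3 * R ^ 4 *
          (energy (dilation (γ ^ 2)) u + energy (dilation (γ ^ 2)) (u ∘ φ)) :=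
        sum_norm_sq_le_energy_dilation_add hg hγ hNLR hR hu0 hu
    _ ≤ 9 * (L : ℝ) ^ 2 * N ^ 3 * R ^ 4 *
          (2 * (energy ρ u + energy ρ' u) + 2 * (energy ρ u + energy ρ' u)) := by gcongr
    _ = _ := by ring

end Poincare

section Scale

/-- The subexponential scale `exp (log p / log log p)`; every quantity in the argument is bounded by
a fixed power of it. -/
noncomputable def subexpScale (p : ℕ) : ℝ := Real.exp (Real.log p / Real.log (Real.log p))

lemma exp_mul_log_div_log_log (k p : ℕ) :
    Real.exp (k * Real.log p / Real.log (Real.log p)) = subexpScale p ^ k := by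
  rw [subexpScale, ← Real.exp_nat_mul, mul_div_assoc]

lemma sq_log_le_self {x : ℝ} (hx : 1 ≤ x) : Real.log x ^ 2 ≤ x := by
  set t := Real.log x
  have ht : 0 ≤ t := Real.log_nonneg hx
  have hexp : t ≤ Real.exp (t / 2) := by
    have := Real.quadratic_le_exp_of_nonneg (x := t / 2) (by linarith)
    nlinarith [sq_nonneg (t - 2)]
  calc t ^ 2 ≤ Real.exp (t / 2) ^ 2 := by gcongr
    _ = Real.exp t := by rw [← Real.exp_nat_mul]; congr 1; push_cast; ring
    _ = x := Real.exp_log (by linarith)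

variable {p : ℕ} (hp : 16 ≤ p)
include hp

lemma exp_one_le_log : Real.exp 1 ≤ Real.log p := by
  have hlog : Real.log 16 = 4 * Real.log 2 := by
    rw [show (16 : ℝ) = 2 ^ 4 by norm_num, Real.log_pow]; norm_num
  have hmono : Real.log 16 ≤ Real.log p := Real.log_le_log (by norm_num) (by exact_mod_cast hp)
  linarith [Real.log_two_gt_d9, Real.exp_one_lt_d9]

lemma one_le_log_log : 1 ≤ Real.log (Real.log p) := by
  have h := exp_one_le_log hp
  rwa [Real.le_log_iff_exp_le ((Real.exp_pos 1).trans_le h)]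

lemma log_log_le_log_div_log_log :
    Real.log (Real.log p) ≤ Real.log p / Real.log (Real.log p) := by
  have hloglog := one_le_log_log hp
  rw [le_div_iff₀ (by linarith), ← pow_two]
  exact sq_log_le_self (by linarith [exp_one_le_log hp, Real.exp_one_gt_d9])

lemma log_le_subexpScale : Real.log p ≤ subexpScale p := by
  rw [← Real.exp_log (x := Real.log p) (by linarith [exp_one_le_log hp, Real.exp_pos 1])]
  exact Real.exp_le_exp.2 (log_log_le_log_div_log_log hp)

lemma exp_one_le_subexpScale : Real.exp 1 ≤ subexpScale p :=
  (exp_one_le_log hp).trans (log_le_subexpScale hp)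

lemma le_subexpScale_pow_of_le {c : ℝ} {k : ℕ} (hc : c ≤ 2.7 ^ k) : c ≤ subexpScale p ^ k := by
  have : 2.7 ≤ subexpScale p := by
    linarith [exp_one_le_subexpScale hp, Real.exp_one_gt_d9]
  exact hc.trans (by gcongr)

lemma one_le_subexpScale : 1 ≤ subexpScale p := by
  linarith [exp_one_le_subexpScale hp, Real.exp_one_gt_d9]

lemma lt_floor_subexpScale_add_one_pow :
    p < (⌊subexpScale p⌋₊ + 1) ^ (⌈Real.log (Real.log p)⌉₊ + 1) := by
  set t := Real.log (Real.log p)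
  have ht : 1 ≤ t := one_le_log_log hp
  have hlog : Real.log p ≤ (⌈t⌉₊ + 1 : ℕ) * (Real.log p / t) := by
    have : 0 ≤ Real.log p := Real.log_natCast_nonneg p
    calc Real.log p = t * (Real.log p / t) := by field_simp
      _ ≤ (⌈t⌉₊ + 1 : ℕ) * (Real.log p / t) := by
        gcongr
        exact (Nat.le_ceil t).trans (by push_cast; linarith)
  have hreal : (p : ℝ) < ((⌊subexpScale p⌋₊ : ℝ) + 1) ^ (⌈t⌉₊ + 1) := by
    calc (p : ℝ) = Real.exp (Real.log p) := (Real.exp_log (by positivity)).symm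
      _ ≤ subexpScale p ^ (⌈t⌉₊ + 1) := by
        rw [subexpScale, ← Real.exp_nat_mul]
        exact Real.exp_le_exp.2 hlog
      _ < _ := pow_lt_pow_left₀ (Nat.lt_floor_add_one _)
        (zero_le_one.trans (one_le_subexpScale hp)) (Nat.succ_ne_zero _)
  exact_mod_cast hreal

lemma five_pow_ceil_log_log_le : (5 : ℝ) ^ ⌈Real.log (Real.log p)⌉₊ ≤ subexpScale p ^ 5 := by
  set t := Real.log (Real.log p)
  have ht : 0 ≤ t := zero_le_one.trans (one_le_log_log hp)
  have hlog : 0 < Real.log p := by linarith [exp_one_le_log hp, Real.exp_pos 1]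
  have hQ := one_le_subexpScale hp
  have h5 : (5 : ℝ) ≤ Real.exp 1 ^ 2 := by nlinarith [Real.exp_one_gt_d9]
  calc (5 : ℝ) ^ ⌈t⌉₊ ≤ (Real.exp 1 ^ 2) ^ ⌈t⌉₊ := by gcongr
    _ = Real.exp ⌈t⌉₊ ^ 2 := by rw [pow_right_comm, Real.exp_one_pow]
    _ ≤ Real.exp (t + 1) ^ 2 := by gcongr; exact (Nat.ceil_lt_add_one ht).le
    _ = (Real.log p * Real.exp 1) ^ 2 := by rw [Real.exp_add, Real.exp_log hlog]
    _ ≤ (subexpScale p * subexpScale p) ^ 2 := by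
      gcongr
      · exact log_le_subexpScale hp
      · exact exp_one_le_subexpScale hp
    _ ≤ subexpScale p ^ 5 := by
      rw [← pow_two, ← pow_mul]
      exact pow_le_pow_right₀ hQ (by norm_num)

lemma one_add_log_mul_five_pow_le :
    ((1 + Nat.log 2 p * 5 ^ ⌈Real.log (Real.log p)⌉₊ : ℕ) : ℝ) ≤ subexpScale p ^ 8 := by
  have hlog : (Nat.log 2 p : ℝ) ≤ subexpScale p ^ 2 := by
    have h2 : (2 : ℝ) ^ Nat.log 2 p ≤ p := by
      exact_mod_cast Nat.pow_log_le_self 2 (by omega : p ≠ 0)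
    have hlog2 := Real.log_le_log (by positivity) h2
    rw [Real.log_pow] at hlog2
    have h27 : (2 : ℝ) ≤ subexpScale p ^ 1 := le_subexpScale_pow_of_le hp (by norm_num)
    nlinarith [Real.log_two_gt_d9, log_le_subexpScale hp, (Nat.log 2 p).cast_nonneg (α := ℝ)]
  have h1 : 1 ≤ subexpScale p ^ 7 := one_le_pow₀ (one_le_subexpScale hp)
  have h2 : 2 ≤ subexpScale p ^ 1 := le_subexpScale_pow_of_le hp (by norm_num)
  push_cast
  calc 1 + (Nat.log 2 p : ℝ) * 5 ^ ⌈Real.log (Real.log p)⌉₊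
      ≤ subexpScale p ^ 7 + subexpScale p ^ 2 * subexpScale p ^ 5 := by
        gcongr
        exact five_pow_ceil_log_log_le hp
    _ = 2 * subexpScale p ^ 7 := by ring
    _ ≤ subexpScale p ^ 1 * subexpScale p ^ 7 := by gcongr
    _ = subexpScale p ^ 8 := by ring

lemma ceil_log_log_add_one_mul_floor_le :
    (((⌈Real.log (Real.log p)⌉₊ + 1) * ⌊subexpScale p⌋₊ : ℕ) : ℝ) ≤ subexpScale p ^ 4 := by
  have hQ := one_le_subexpScale hp
  have ht := one_le_log_log hp
  have hloglog : Real.log (Real.log p) ≤ subexpScale p := by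
    have := Real.log_le_sub_one_of_pos (by linarith [exp_one_le_log hp, Real.exp_pos 1] :
      0 < Real.log p)
    linarith [log_le_subexpScale hp]
  have hceil := Nat.ceil_lt_add_one (zero_le_one.trans ht)
  have h3 : 3 ≤ subexpScale p ^ 2 := le_subexpScale_pow_of_le hp (by norm_num)
  push_cast
  calc ((⌈Real.log (Real.log p)⌉₊ : ℝ) + 1) * ⌊subexpScale p⌋₊
      ≤ (3 * subexpScale p) * subexpScale p := by
        gcongr
        · linarith
        · exact Nat.floor_le (zero_le_one.trans hQ)
    _ = 3 * subexpScale p ^ 2 := by ring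
    _ ≤ subexpScale p ^ 2 * subexpScale p ^ 2 := by gcongr
    _ = subexpScale p ^ 4 := by ring

lemma log_four_mul_sq_le : Real.log (4 * (p : ℝ) ^ 2) ≤ subexpScale p ^ 3 := by
  have hp0 : (p : ℝ) ≠ 0 := by positivity
  have h4 : (4 : ℝ) ≤ subexpScale p ^ 2 := le_subexpScale_pow_of_le hp (by norm_num)
  have hQ := log_le_subexpScale hp
  calc Real.log (4 * (p : ℝ) ^ 2) = 2 * Real.log 2 + 2 * Real.log p := by
        rw [show 4 * (p : ℝ) ^ 2 = (2 * p) ^ 2 by ring, Real.log_pow,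
          Real.log_mul two_ne_zero hp0]
        push_cast
        ring
    _ ≤ 4 * subexpScale p := by
        linarith [Real.log_two_lt_d9, one_le_subexpScale hp]
    _ ≤ subexpScale p ^ 2 * subexpScale p := by
        have := one_le_subexpScale hp
        gcongr
    _ = subexpScale p ^ 3 := by ring

lemma exists_escapes_of_subexpScale_pow_le [Fact p.Prime] {l : ZMod p}
    (hl : subexpScale p ^ 20 ≤ orderOf l) :
    ∃ L N R : ℕ, Escapes l L N ∧ 8 * N * L ^ 2 ≤ R ∧ R < orderOf l ∧
      36 * (L : ℝ) ^ 2 * N ^ 3 * R ^ 4 ≤ subexpScale p ^ 112 := by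
  have hQ : 1 < subexpScale p := by
    linarith [exp_one_le_subexpScale hp, Real.exp_one_gt_d9]
  have hL := ceil_log_log_add_one_mul_floor_le hp
  have hN := one_add_log_mul_five_pow_le hp
  have h5 := five_pow_ceil_log_log_le hp
  have h8 : 8 ≤ subexpScale p ^ 3 := le_subexpScale_pow_of_le hp (by norm_num)
  have h36 : 36 ≤ subexpScale p ^ 4 := le_subexpScale_pow_of_le hp (by norm_num)
  have hord {m k : ℕ} (hm : (m : ℝ) ≤ subexpScale p ^ k) (hk : k < 20) : m < orderOf l := by
    exact_mod_cast (hm.trans_lt (pow_lt_pow_right₀ hQ hk)).trans_le hl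
  have hescapes := escapes_of_lt_pow (lt_floor_subexpScale_add_one_pow hp)
    (hord (by exact_mod_cast h5) (by norm_num))
  set L := (⌈Real.log (Real.log p)⌉₊ + 1) * ⌊subexpScale p⌋₊
  set N := 1 + Nat.log 2 p * 5 ^ ⌈Real.log (Real.log p)⌉₊
  have hR : ((8 * N * L ^ 2 : ℕ) : ℝ) ≤ subexpScale p ^ 19 := by
    simp only [Nat.cast_mul, Nat.cast_pow, Nat.cast_ofNat]
    calc (8 : ℝ) * N * L ^ 2
        ≤ subexpScale p ^ 3 * subexpScale p ^ 8 * (subexpScale p ^ 4) ^ 2 := by gcongr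
      _ = subexpScale p ^ 19 := by ring
  refine ⟨L, N, 8 * N * L ^ 2, hescapes, le_rfl, hord hR (by norm_num), ?_⟩
  calc 36 * (L : ℝ) ^ 2 * N ^ 3 * (8 * N * L ^ 2 : ℕ) ^ 4
      ≤ subexpScale p ^ 4 * (subexpScale p ^ 4) ^ 2 * (subexpScale p ^ 8) ^ 3 *
          (subexpScale p ^ 19) ^ 4 := by gcongr
    _ = subexpScale p ^ 112 := by ring

end Scale

section LazyWalk

variable {α : Type*}

/-- The one-step law of a lazy walk at `x`: stay with probability `1/2`, otherwise move to `a` or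
`b` with equal probability, decided by two fair coins. -/
noncomputable def lazyKernel (x a b : α) : PMF α :=
  PMF.map (fun t : Bool × Bool => if t.1 then x else if t.2 then a else b)
    (PMF.uniformOfFintype (Bool × Bool))

lemma lazyKernel_apply_toReal [DecidableEq α] (x a b y : α) :
    (lazyKernel x a b y).toReal = 1 / 2 * (if x = y then 1 else 0) +
      1 / 4 * (if a = y then 1 else 0) + 1 / 4 * (if b = y then 1 else 0) := by
  have hcard : ((Fintype.card (Bool × Bool) : ENNReal)⁻¹).toReal = 1 / 4 := by simp
  rw [lazyKernel, PMF.map_apply, tsum_fintype,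
    ENNReal.toReal_sum fun t _ => by split_ifs <;> simp]
  simp only [Fintype.sum_prod_type, Fintype.sum_bool, PMF.uniformOfFintype_apply,
    apply_ite ENNReal.toReal, hcard, ENNReal.toReal_zero, if_true, Bool.false_eq_true, if_false,
    eq_comm (a := y)]
  split_ifs <;> norm_num

lemma mem_of_mem_support_lazyKernel {W : Set α} {x a b : α} (hx : x ∈ W) (ha : a ∈ W) (hb : b ∈ W)
    {y : α} (hy : y ∈ (lazyKernel x a b).support) : y ∈ W := by
  obtain ⟨t, -, rfl⟩ := (PMF.mem_support_map_iff _ _ _).1 hy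
  split_ifs <;> assumption

lemma walkDist_succ (step : α → PMF α) (x₀ : α) (n : ℕ) :
    walkDist step x₀ (n + 1) = (walkDist step x₀ n).bind step :=
  Function.iterate_succ_apply' _ _ _

lemma walkDist_congr_of_absorbing {step step' : α → PMF α} {W : Set α}
    (hW : ∀ x ∈ W, ∀ y ∈ (step x).support, y ∈ W) (hstep : ∀ x ∈ W, step x = step' x)
    {x₀ : α} (hx₀ : x₀ ∈ W) (n : ℕ) : walkDist step x₀ n = walkDist step' x₀ n := by
  have hsupport (n : ℕ) : ∀ x ∈ (walkDist step x₀ n).support, x ∈ W := by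
    induction n with
    | zero => simpa [walkDist] using hx₀
    | succ n ih =>
      intro y hy
      rw [walkDist_succ, PMF.mem_support_bind_iff] at hy
      obtain ⟨x, hx, hxy⟩ := hy
      exact hW x (ih x hx) y hxy
  induction n with
  | zero => rfl
  | succ n ih =>
    rw [walkDist_succ, walkDist_succ, ← ih]
    ext y
    simp only [PMF.bind_apply]
    refine tsum_congr fun x => ?_
    by_cases hx : x ∈ (walkDist step x₀ n).support
    · rw [hstep x (hsupport n x hx)]
    · rw [(PMF.apply_eq_zero_iff _ _).2 hx, zero_mul, zero_mul]

/-- The action of one step of the lazy walk along the permutations `ρ` and `ρ'` on densities: the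
density `f` is pushed forward, which is why the inverses appear. -/
noncomputable def lazyStep (ρ ρ' : Equiv.Perm α) : Module.End ℝ (α → ℝ) :=
  (1 / 2 : ℝ) • LinearMap.id + (1 / 4 : ℝ) • LinearMap.funLeft ℝ ℝ ⇑ρ⁻¹ +
    (1 / 4 : ℝ) • LinearMap.funLeft ℝ ℝ ⇑ρ'⁻¹

lemma lazyStep_apply (ρ ρ' : Equiv.Perm α) (f : α → ℝ) (y : α) :
    lazyStep ρ ρ' f y = 1 / 2 * f y + 1 / 4 * f (ρ⁻¹ y) + 1 / 4 * f (ρ'⁻¹ y) := rfl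

lemma lazyStep_apply_of_fixed {ρ ρ' : Equiv.Perm α} {o : α} (hρ : ρ o = o) (hρ' : ρ' o = o)
    (f : α → ℝ) : lazyStep ρ ρ' f o = f o := by
  rw [lazyStep_apply, Equiv.Perm.inv_eq_iff_eq.2 hρ.symm, Equiv.Perm.inv_eq_iff_eq.2 hρ'.symm]
  ring

lemma walkDist_lazyKernel_toReal [Finite α] [DecidableEq α] (ρ ρ' : Equiv.Perm α) (x₀ : α) (n : ℕ) :
    (fun y => (walkDist (fun x => lazyKernel x (ρ x) (ρ' x)) x₀ n y).toReal) =
      (lazyStep ρ ρ' ^ n) (Pi.single x₀ 1) := by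
  cases nonempty_fintype α
  induction n with
  | zero =>
    ext y
    simp [walkDist, Pi.single_apply, apply_ite ENNReal.toReal]
  | succ n ih =>
    rw [pow_succ', Module.End.mul_apply, ← ih]
    ext y
    rw [walkDist_succ, PMF.bind_apply, tsum_fintype, ENNReal.toReal_sum fun x _ =>
      ENNReal.mul_ne_top (PMF.apply_ne_top _ _) (PMF.apply_ne_top _ _), lazyStep_apply]
    simp only [ENNReal.toReal_mul, lazyKernel_apply_toReal, mul_add, Finset.sum_add_distrib,
      ← Equiv.Perm.eq_inv_iff_eq, mul_ite, mul_one, mul_zero, Finset.sum_ite_eq',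
      Finset.mem_univ, if_true]
    ring

variable [Fintype α]

lemma sum_lazyStep (ρ ρ' : Equiv.Perm α) (f : α → ℝ) : ∑ y, lazyStep ρ ρ' f y = ∑ y, f y := by
  simp only [lazyStep_apply, Finset.sum_add_distrib, ← Finset.mul_sum,
    Equiv.sum_comp ρ⁻¹ f, Equiv.sum_comp ρ'⁻¹ f]
  ring

lemma sum_sq_lazyStep_le (ρ ρ' : Equiv.Perm α) (f : α → ℝ) :
    ∑ y, lazyStep ρ ρ' f y ^ 2 ≤ ∑ y, f y ^ 2 - 1 / 8 * (energy ρ f + energy ρ' f) := by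
  have hpoint (y : α) : lazyStep ρ ρ' f y ^ 2 ≤
      1 / 2 * f y ^ 2 + 1 / 4 * f (ρ⁻¹ y) ^ 2 + 1 / 4 * f (ρ'⁻¹ y) ^ 2 -
        (1 / 8 * ‖f (ρ⁻¹ y) - f y‖ ^ 2 + 1 / 8 * ‖f (ρ'⁻¹ y) - f y‖ ^ 2) := by
    simp only [lazyStep_apply, Real.norm_eq_abs, sq_abs]
    nlinarith [sq_nonneg (f (ρ⁻¹ y) - f (ρ'⁻¹ y))]
  refine (Finset.sum_le_sum fun y _ => hpoint y).trans_eq ?_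
  rw [← energy_inv ρ, ← energy_inv ρ', energy, energy]
  simp only [Finset.sum_sub_distrib, Finset.sum_add_distrib, ← Finset.mul_sum,
    Equiv.sum_comp ρ⁻¹ fun y => f y ^ 2, Equiv.sum_comp ρ'⁻¹ fun y => f y ^ 2]
  ring

lemma sum_sq_lazyStep_pow_le {ρ ρ' : Equiv.Perm α} {V : Set (α → ℝ)}
    (hV : Set.MapsTo (lazyStep ρ ρ') V V) {K : ℝ} (hK : 0 < K)
    (hpoincare : ∀ f ∈ V, ∑ x, f x ^ 2 ≤ K * (energy ρ f + energy ρ' f))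
    {f : α → ℝ} (hf : f ∈ V) (n : ℕ) :
    ∑ x, (lazyStep ρ ρ' ^ n) f x ^ 2 ≤ Real.exp (-(n / (8 * K))) * ∑ x, f x ^ 2 := by
  have hcontract (f : α → ℝ) (hf : f ∈ V) :
      ∑ x, lazyStep ρ ρ' f x ^ 2 ≤ Real.exp (-(1 / (8 * K))) * ∑ x, f x ^ 2 := by
    have hgap : (∑ x, f x ^ 2) / K ≤ energy ρ f + energy ρ' f :=
      (div_le_iff₀' hK).2 (hpoincare f hf)
    have : 0 ≤ ∑ x, f x ^ 2 := Finset.sum_nonneg fun _ _ => sq_nonneg _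
    calc ∑ x, lazyStep ρ ρ' f x ^ 2 ≤ ∑ x, f x ^ 2 - 1 / 8 * ((∑ x, f x ^ 2) / K) := by
          linarith [sum_sq_lazyStep_le ρ ρ' f]
      _ = (1 - 1 / (8 * K)) * ∑ x, f x ^ 2 := by field_simp
      _ ≤ Real.exp (-(1 / (8 * K))) * ∑ x, f x ^ 2 := by
          gcongr
          exact Real.one_sub_le_exp_neg _
  induction n generalizing f with
  | zero => simp
  | succ n ih =>
    rw [pow_succ, Module.End.mul_apply]
    calc ∑ x, (lazyStep ρ ρ' ^ n) (lazyStep ρ ρ' f) x ^ 2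
        ≤ Real.exp (-(n / (8 * K))) * (Real.exp (-(1 / (8 * K))) * ∑ x, f x ^ 2) :=
          (ih (hV hf)).trans (by gcongr; exact hcontract f hf)
      _ = Real.exp (-((n + 1 : ℕ) / (8 * K))) * ∑ x, f x ^ 2 := by
          rw [← mul_assoc, ← Real.exp_add]
          congr 2
          push_cast
          ring

/-- The density of the uniform distribution on the complement of `{o}`. -/
noncomputable def uniformAway [DecidableEq α] (o : α) (y : α) : ℝ :=
  if y = o then 0 else 1 / ((Fintype.card α : ℝ) - 1)

lemma sum_uniformAway [DecidableEq α] [Nontrivial α] (o : α) : ∑ y, uniformAway o y = 1 := by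
  have hcard : (1 : ℝ) < Fintype.card α := Nat.one_lt_cast.2 Fintype.one_lt_card
  have hsplit (y : α) : uniformAway o y = 1 / ((Fintype.card α : ℝ) - 1) -
      if y = o then 1 / ((Fintype.card α : ℝ) - 1) else 0 := by
    unfold uniformAway
    split_ifs <;> simp
  simp only [hsplit, Finset.sum_sub_distrib, Finset.sum_ite_eq', Finset.mem_univ, if_true,
    Finset.sum_const, Finset.card_univ, nsmul_eq_mul]
  field_simp [sub_ne_zero.2 hcard.ne']

lemma lazyStep_uniformAway [DecidableEq α] {ρ ρ' : Equiv.Perm α} {o : α} (hρ : ρ o = o)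
    (hρ' : ρ' o = o) : lazyStep ρ ρ' (uniformAway o) = uniformAway o := by
  ext y
  simp only [lazyStep_apply, uniformAway, Equiv.Perm.inv_eq_iff_eq, hρ, hρ']
  ring

lemma sum_sq_single_sub_uniformAway_le [DecidableEq α] [Nontrivial α] (x₀ o : α) :
    ∑ y, (Pi.single x₀ 1 - uniformAway o : α → ℝ) y ^ 2 ≤ Fintype.card α := by
  have hcard : (2 : ℝ) ≤ Fintype.card α := by exact_mod_cast Fintype.one_lt_card
  have hinv : 1 / ((Fintype.card α : ℝ) - 1) ∈ Set.Icc (0 : ℝ) 1 :=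
    ⟨div_nonneg zero_le_one (by linarith), (div_le_one (by linarith)).2 (by linarith)⟩
  have hpoint (y : α) : (Pi.single x₀ 1 - uniformAway o : α → ℝ) y ^ 2 ≤ (1 : ℝ) := by
    rw [sq_le_one_iff_abs_le_one, Pi.sub_apply, Pi.single_apply, uniformAway, abs_le]
    split_ifs <;> constructor <;> linarith [hinv.1, hinv.2]
  calc ∑ y, (Pi.single x₀ 1 - uniformAway o : α → ℝ) y ^ 2 ≤ ∑ _y : α, (1 : ℝ) :=
        Finset.sum_le_sum fun y _ => hpoint y
    _ = Fintype.card α := by simp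

lemma sum_walkDist_sub_eq [DecidableEq α] {ρ ρ' : Equiv.Perm α} {o : α} (hρ : ρ o = o)
    (hρ' : ρ' o = o) (x₀ : α) (n : ℕ) {A : Finset α} (hA : o ∉ A) :
    ∑ x ∈ A, (walkDist (fun x => lazyKernel x (ρ x) (ρ' x)) x₀ n x).toReal -
        A.card / ((Fintype.card α : ℝ) - 1) =
      ∑ x ∈ A, (lazyStep ρ ρ' ^ n) (Pi.single x₀ 1 - uniformAway o) x := by
  have hfixed : (lazyStep ρ ρ' ^ n) (uniformAway o) = uniformAway o := by
    rw [Module.End.pow_apply]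
    exact Function.iterate_fixed (lazyStep_uniformAway hρ hρ') n
  have huniform : ∑ x ∈ A, uniformAway o x = A.card / ((Fintype.card α : ℝ) - 1) := by
    unfold uniformAway
    rw [Finset.sum_congr rfl fun x hx => if_neg (ne_of_mem_of_not_mem hx hA), Finset.sum_const,
      nsmul_eq_mul, mul_one_div]
  rw [map_sub, hfixed, ← walkDist_lazyKernel_toReal, ← huniform, ← Finset.sum_sub_distrib]
  rfl

lemma abs_sum_walkDist_sub_le {ρ ρ' : Equiv.Perm α} {o : α} (hρ : ρ o = o) (hρ' : ρ' o = o)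
    {K : ℝ} (hK : 0 < K) (hpoincare : ∀ f : α → ℝ, f o = 0 → ∑ x, f x = 0 →
      ∑ x, f x ^ 2 ≤ K * (energy ρ f + energy ρ' f))
    {x₀ : α} (hx₀ : x₀ ≠ o) {n : ℕ} (hn : 8 * K * Real.log (4 * (Fintype.card α : ℝ) ^ 2) ≤ n)
    {A : Finset α} (hA : o ∉ A) :
    |∑ x ∈ A, (walkDist (fun x => lazyKernel x (ρ x) (ρ' x)) x₀ n x).toReal -
        A.card / ((Fintype.card α : ℝ) - 1)| ≤ 1 / 2 := by
  classical
  have : Nontrivial α := ⟨x₀, o, hx₀⟩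
  have : (0 : ℝ) < Fintype.card α := Nat.cast_pos.2 Fintype.card_pos
  set V : Set (α → ℝ) := {f | f o = 0 ∧ ∑ x, f x = 0}
  have hV : Set.MapsTo (lazyStep ρ ρ') V V := fun f hf =>
    ⟨(lazyStep_apply_of_fixed hρ hρ' f).trans hf.1, (sum_lazyStep ρ ρ' f).trans hf.2⟩
  set u := Pi.single x₀ 1 - uniformAway o with hu
  have huV : u ∈ V := by
    refine ⟨by simp [hu, uniformAway, hx₀.symm], ?_⟩
    simp only [hu, Pi.sub_apply, Finset.sum_sub_distrib, sum_uniformAway, Finset.sum_pi_single',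
      Finset.mem_univ, if_true, sub_self]
  have hexp : Real.exp (-(n / (8 * K))) ≤ 1 / (4 * (Fintype.card α : ℝ) ^ 2) := by
    rw [one_div, ← Real.exp_log (x := 4 * (Fintype.card α : ℝ) ^ 2) (by positivity),
      ← Real.exp_neg]
    exact Real.exp_le_exp.2 (neg_le_neg ((le_div_iff₀' (by positivity)).2 hn))
  have hdecay : ∑ x, (lazyStep ρ ρ' ^ n) u x ^ 2 ≤ 1 / (4 * (Fintype.card α : ℝ)) :=
    calc ∑ x, (lazyStep ρ ρ' ^ n) u x ^ 2
        ≤ Real.exp (-(n / (8 * K))) * ∑ x, u x ^ 2 :=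
          sum_sq_lazyStep_pow_le hV hK (fun f hf => hpoincare f hf.1 hf.2) huV n
      _ ≤ 1 / (4 * (Fintype.card α : ℝ) ^ 2) * Fintype.card α := by
          gcongr
          exact sum_sq_single_sub_uniformAway_le x₀ o
      _ = 1 / (4 * (Fintype.card α : ℝ)) := by field_simp
  rw [sum_walkDist_sub_eq hρ hρ' x₀ n hA]
  refine abs_le_of_sq_le_sq ?_ (by norm_num)
  calc (∑ x ∈ A, (lazyStep ρ ρ' ^ n) u x) ^ 2
      ≤ A.card * ∑ x ∈ A, (lazyStep ρ ρ' ^ n) u x ^ 2 := sq_sum_le_card_mul_sum_sq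
    _ ≤ Fintype.card α * (1 / (4 * (Fintype.card α : ℝ))) := by
        gcongr
        · exact A.card_le_univ
        · exact (Finset.sum_le_univ_sum_of_nonneg fun _ => sq_nonneg _).trans hdecay
    _ = (1 / 2) ^ 2 := by field_simp; norm_num

end LazyWalk

section LogarithmWalk

lemma energy_ofReal {α : Type*} [Fintype α] (σ : Equiv.Perm α) (f : α → ℝ) :
    energy σ (fun x => (f x : ℂ)) = energy σ f := by
  simp only [energy, ← Complex.ofReal_sub, Complex.norm_real]

variable {p : ℕ} [Fact p.Prime] {g : (ZMod p)ˣ} (hg : IsPrimitiveRoot g (p - 1))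

lemma sum_sq_le_subexpScale_pow_mul_energy (hp : 16 ≤ p) {γ : (ZMod p)ˣ}
    (hγ : subexpScale p ^ 21 ≤ orderOf γ) {f : ZMod p → ℝ} (hf0 : f 0 = 0) (hf : ∑ x, f x = 0) :
    ∑ x, f x ^ 2 ≤ subexpScale p ^ 112 *
      (energy (dilation γ * (expPerm hg)⁻¹) f + energy (dilation γ⁻¹ * (expPerm hg)⁻¹) f) := by
  have hord : subexpScale p ^ 20 ≤ orderOf ((γ ^ 2 : (ZMod p)ˣ) : ZMod p) := by
    have hle : orderOf γ ≤ 2 * orderOf (γ ^ 2) :=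
      orderOf_le_of_pow_eq_one (by have := orderOf_pos (γ ^ 2); omega)
        (by rw [pow_mul, pow_orderOf_eq_one])
    have h2 : 2 ≤ subexpScale p ^ 1 := le_subexpScale_pow_of_le hp (by norm_num)
    have hQ : 0 ≤ subexpScale p ^ 20 := by unfold subexpScale; positivity
    rw [orderOf_units]
    have hle' : (orderOf γ : ℝ) ≤ 2 * orderOf (γ ^ 2) := by exact_mod_cast hle
    nlinarith
  obtain ⟨L, N, R, hescapes, hNLR, hR, hK⟩ := exists_escapes_of_subexpScale_pow_le hp hord
  rw [orderOf_units] at hR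
  have hgap := sum_norm_sq_le_energy_mul_inv hg hescapes hNLR hR
    (u := fun x => (f x : ℂ)) (by simp [hf0])
    (by rw [← Complex.ofReal_sum, hf, Complex.ofReal_zero])
  simp only [energy_ofReal, Complex.norm_real, Real.norm_eq_abs, sq_abs] at hgap
  have h₁ := energy_nonneg (dilation γ * (expPerm hg)⁻¹) f
  have h₂ := energy_nonneg (dilation γ⁻¹ * (expPerm hg)⁻¹) f
  exact hgap.trans (by gcongr)

lemma natCast_eq_expPerm_inv {x : ZMod p} {m : ℕ} (hm : 1 ≤ m ∧ m ≤ p - 1 ∧ (g : ZMod p) ^ m = x) :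
    (m : ZMod p) = (expPerm hg)⁻¹ x := by
  rw [Equiv.Perm.eq_inv_iff_eq, expPerm_natCast hg hm.1 (by omega), hm.2.2]

lemma walkDist_logStep_eq {γ : (ZMod p)ˣ} {ind : ZMod p → ℕ}
    (hind : ∀ x : ZMod p, x ≠ 0 → 1 ≤ ind x ∧ ind x ≤ p - 1 ∧ (g : ZMod p) ^ ind x = x)
    {x₀ : ZMod p} (hx₀ : x₀ ≠ 0) (n : ℕ) :
    walkDist (fun x => lazyKernel x (ind x * γ) (ind x * (γ : ZMod p)⁻¹)) x₀ n =
      walkDist (fun x => lazyKernel x ((dilation γ * (expPerm hg)⁻¹) x)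
        ((dilation γ⁻¹ * (expPerm hg)⁻¹) x)) x₀ n := by
  refine walkDist_congr_of_absorbing (W := {x | x ≠ 0}) (fun x hx y hy => ?_) (fun x hx => ?_) hx₀ n
  · have hindx : (ind x : ZMod p) ≠ 0 := by
      rw [natCast_eq_expPerm_inv hg (hind x hx), Ne, Equiv.Perm.inv_eq_iff_eq, expPerm_zero]
      exact hx
    exact mem_of_mem_support_lazyKernel hx (mul_ne_zero hindx γ.ne_zero)
      (mul_ne_zero hindx (inv_ne_zero γ.ne_zero)) hy
  · simp only [Equiv.Perm.mul_apply, dilation_apply, Units.val_inv_eq_inv_val,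
      ← natCast_eq_expPerm_inv hg (hind x hx), mul_comm (ind x : ZMod p)]

include hg in
lemma abs_sum_walkDist_log_sub_le (hp : 16 ≤ p) {γ : (ZMod p)ˣ}
    (hγ : subexpScale p ^ 21 ≤ orderOf γ) {ind : ZMod p → ℕ}
    (hind : ∀ x : ZMod p, x ≠ 0 → 1 ≤ ind x ∧ ind x ≤ p - 1 ∧ (g : ZMod p) ^ ind x = x)
    {x₀ : ZMod p} (hx₀ : x₀ ≠ 0) {n : ℕ} (hn : subexpScale p ^ 118 ≤ n) {A : Finset (ZMod p)}
    (hA : 0 ∉ A) :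
    |∑ x ∈ A,
        (walkDist (fun x => lazyKernel x (ind x * γ) (ind x * (γ : ZMod p)⁻¹)) x₀ n x).toReal -
      A.card / ((p : ℝ) - 1)| ≤ 1 / 2 := by
  have hfix (l : (ZMod p)ˣ) : (dilation l * (expPerm hg)⁻¹) 0 = 0 := by
    rw [Equiv.Perm.mul_apply, Equiv.Perm.inv_eq_iff_eq.2 (expPerm_zero hg).symm, dilation_apply,
      mul_zero]
  have h8 : 8 ≤ subexpScale p ^ 3 := le_subexpScale_pow_of_le hp (by norm_num)
  have hQ : 0 < subexpScale p := Real.exp_pos _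
  have hp' : (1 : ℝ) ≤ p := by exact_mod_cast (by omega : 1 ≤ p)
  have htime : 8 * subexpScale p ^ 112 * Real.log (4 * (p : ℝ) ^ 2) ≤ n :=
    calc 8 * subexpScale p ^ 112 * Real.log (4 * (p : ℝ) ^ 2)
        ≤ subexpScale p ^ 3 * subexpScale p ^ 112 * subexpScale p ^ 3 := by
          refine mul_le_mul ?_ (log_four_mul_sq_le hp) ?_ (by positivity)
          · gcongr
          · exact Real.log_nonneg (by nlinarith)
      _ = subexpScale p ^ 118 := by ring
      _ ≤ n := hn
  have hmix := abs_sum_walkDist_sub_le (hfix γ) (hfix γ⁻¹) (pow_pos hQ 112)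
    (fun _ => sum_sq_le_subexpScale_pow_mul_energy hg hp hγ) hx₀ (by rwa [ZMod.card]) hA
  rwa [ZMod.card, ← walkDist_logStep_eq hg hind hx₀] at hmix

end LogarithmWalk

theorem stmt2 :
    ∃ C1 C2 : ℝ, 0 < C1 ∧ 0 < C2 ∧
      ∀ (p : ℕ) [Fact p.Prime], 16 ≤ p →
        ∀ g : ZMod p, IsPrimitiveRoot g (p - 1) →
          ∀ ind : ZMod p → ℕ,
            (∀ x : ZMod p, x ≠ 0 → 1 ≤ ind x ∧ ind x ≤ p - 1 ∧ g ^ ind x = x) →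
            ∀ γ : ZMod p, γ ≠ 0 →
              Real.exp (C1 * Real.log p / Real.log (Real.log p)) ≤ orderOf γ →
              ∀ X0 : ZMod p, X0 ≠ 0 →
                ∀ step : ZMod p → PMF (ZMod p),
                  step = (fun x => PMF.map
                    (fun b : Bool × Bool =>
                      if b.1 then x
                      else if b.2 then ((ind x : ZMod p)) * γ
                      else ((ind x : ZMod p)) * γ⁻¹)
                    (PMF.uniformOfFintype (Bool × Bool))) →
                  ∀ n : ℕ, Real.exp (C2 * Real.log p / Real.log (Real.log p)) ≤ n →
                    ∀ A : Finset (ZMod p), (∀ x ∈ A, x ≠ 0) →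
                      (1/2) * |(∑ x ∈ A, (walkDist step X0 n x).toReal)
                          - (A.card : ℝ) / ((p : ℝ) - 1)| ≤ 1/4 := by
  refine ⟨21, 118, by norm_num, by norm_num, ?_⟩
  rintro p _ hp g hg ind hind γ hγ hord x₀ hx₀ step rfl n hn A hA
  lift g to (ZMod p)ˣ using hg.isUnit (by omega)
  lift γ to (ZMod p)ˣ using hγ.isUnit
  rw [IsPrimitiveRoot.coe_units_iff] at hg
  have hγ : subexpScale p ^ 21 ≤ orderOf γ := by
    rw [← exp_mul_log_div_log_log, ← orderOf_units]
    exact_mod_cast hord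
  have hn : subexpScale p ^ 118 ≤ n := by
    rw [← exp_mul_log_div_log_log]
    exact_mod_cast hn
  have hdist := abs_sum_walkDist_log_sub_le hg hp hγ hind hx₀ hn fun h => hA 0 h rfl
  unfold lazyKernel at hdist
  linarith
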